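/- Let S be a one-dimensional Cohen-Macaulay homogeneous graded ring over a field k with minimal multiplicity which is not Gorenstein, x a degree-one element with xn = n² for the graded maximal ideal n, and R = S/x²S. Then the residue field k = R/m has no right G(R)-approximation; in particular the subcategory G(R) of modules of G-dimension zero is not contravariantly finite in the category of finitely generated R-modules. -/

import Mathlib

open CategoryTheory

noncomputable abbrev ExtGrp (R : Type) [CommRing R] (M N : Type) [AddCommGroup M] [Module R M]
    [AddCommGroup N] [Module R N] (i : ℕ) : Type :=
  ((Ext R (ModuleCat R) i).obj (Opposite.op (ModuleCat.of R M))).obj (ModuleCat.of R N)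

/-- G-dimension zero. -/
def GDimZero (R : Type) [CommRing R] (M : Type) [AddCommGroup M] [Module R M] : Prop :=
  Function.Bijective (Module.Dual.eval R M) ∧
  (∀ i : ℕ, 0 < i → Subsingleton (ExtGrp R M R i)) ∧
  (∀ i : ℕ, 0 < i → Subsingleton (ExtGrp R (Module.Dual R M) R i))

/-- finite self-injective dimension -/
def HasFiniteSelfInjDim (R : Type) [CommRing R] : Prop :=
  ∃ n : ℕ, ∀ (N : ModuleCat R) (i : ℕ), n < i →
    Subsingleton (((Ext R (ModuleCat R) i).obj (Opposite.op N)).obj (ModuleCat.of R R))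

/-- Gorenstein local ring -/
def IsGorensteinLocalRing (R : Type) [CommRing R] : Prop :=
  IsNoetherianRing R ∧ IsLocalRing R ∧ HasFiniteSelfInjDim R

/-- length of a module, as Krull dimension of its submodule lattice -/
noncomputable def mlength (R : Type) [CommRing R] (M : Type) [AddCommGroup M] [Module R M] :
    WithBot ℕ∞ :=
  Order.krullDim (Submodule R M)

/-- A standard graded (homogeneous) algebra over a field: the degree-0 part is k,
the algebra is generated in degree 1, and all graded pieces are finite dimensional. -/
def IsStandardGraded (k S : Type) [Field k] [CommRing S] [Algebra k S]
    (𝒮 : ℕ → Submodule k S) [GradedAlgebra 𝒮] : Prop :=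
  𝒮 0 = (1 : Submodule k S) ∧ Algebra.adjoin k ((𝒮 1 : Set S)) = ⊤ ∧
    ∀ n, FiniteDimensional k ↥(𝒮 n)

/-- `GDimLE R n M` : the G-dimension of `M` over `R` is at most `n`,
i.e. an `n`-th syzygy of `M` has G-dimension zero. -/
def GDimLE (R : Type) [CommRing R] : ℕ → ∀ (M : Type) [AddCommGroup M] [Module R M], Prop
  | 0, M, _, _ => GDimZero R M
  | n + 1, M, _, _ => ∃ (b : ℕ) (π : (Fin b → R) →ₗ[R] M),
      Function.Surjective π ∧ GDimLE R n ↥(LinearMap.ker π)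

/-- `ProjDimLE S n M` : the projective dimension of `M` over `S` is at most `n`. -/
def ProjDimLE (S : Type) [CommRing S] : ℕ → ∀ (M : Type) [AddCommGroup M] [Module S M], Prop
  | 0, M, _, _ => Module.Projective S M
  | n + 1, M, _, _ => ∃ (b : ℕ) (π : (Fin b → S) →ₗ[S] M),
      Function.Surjective π ∧ ProjDimLE S n ↥(LinearMap.ker π)

/-!
Let `𝔫` be the irrelevant ideal of `S` and `𝔪` the maximal ideal of `R = S / x²S`. In `R` we have
`(0 : x) = xR`, `𝔪² ⊆ x𝔪` and `x𝔪² = 0`. A matrix factorization of `x²` over `S` reduces to a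
totally acyclic complex over `R`. With generators `vᵢ` of `𝔫` and the nilpotent matrix `A` sending
the word `il` to `vᵢ l`, the matrix `x - A` is a factor of `x²`, and its cokernel is a module of
G-dimension zero with vectors `e_l` for all words `l` of length at most `N` such that `x e_∅ = 0`,
`x e_{il} = vᵢ e_l`, and `e_∅` can be sent to any vector of `k`.

Suppose `X → k` is a right approximation. The maps to `k` factor through `X`, so `X` contains such
chains of every length, and as `X` is Artinian they stabilize to a submodule `U` with `𝔪U ⊆ xU`
that contains some `u ∉ 𝔪X` with `xu = 0`. Embed `X` in a minimal coresolution
`F₀ → F₁ → ⋯` by free modules. Writing `u = xa`, the vector `Da` of the next cosyzygy and the image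
under `D` of a colon submodule `W ∋ a` of `U` again satisfy these conditions, while the length of
the image of `U` in `F / xF` drops strictly: an infinite descent.
-/

section ExtOfResolution

variable {R : Type} [CommRing R]

theorem subsingleton_ext_succ_iff_of_projectiveResolution {M : ModuleCat.{0} R}
    (P : ProjectiveResolution M) (N : ModuleCat.{0} R) (i : ℕ) :
    Subsingleton (((Ext R (ModuleCat R) (i + 1)).obj (Opposite.op M)).obj N) ↔
      Function.Exact ((P.complex.d (i + 1) i).hom.lcomp R N)
        ((P.complex.d (i + 2) (i + 1)).hom.lcomp R N) := by
  rw [← ModuleCat.isZero_iff_subsingleton, (P.isoExt (R := R) (i + 1) N).isZero_iff,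
    ← HomologicalComplex.exactAt_iff_isZero_homology,
    HomologicalComplex.exactAt_iff' _ i (i + 1) (i + 2) (by simp) (by simp),
    ShortComplex.moduleCat_exact_iff]
  refine ⟨fun h => ?_, fun h f hf => ?_⟩
  · refine Function.Exact.of_comp_of_mem_range ?_ fun f hf => ?_
    · ext g z
      exact (congrArg (fun q => g (q.hom z)) (P.complex.d_comp_d (i + 2) (i + 1) i)).trans
        (map_zero g)
    · obtain ⟨g, hg⟩ := h (ModuleCat.ofHom f) (ModuleCat.hom_ext hf)
      exact ⟨g.hom, congrArg ModuleCat.Hom.hom hg⟩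
  · obtain ⟨g, hg⟩ := (h f.hom).1 (congrArg ModuleCat.Hom.hom hf)
    exact ⟨ModuleCat.ofHom g, ModuleCat.hom_ext hg⟩

variable {M N : Type} [AddCommGroup M] [Module R M] [AddCommGroup N] [Module R N]
  {X : ℕ → Type} [∀ i, AddCommGroup (X i)] [∀ i, Module R (X i)]

/-- The chain complex of `ModuleCat R` underlying a resolution given by linear maps. -/
noncomputable def chainComplexOfExact (d : ∀ i, X (i + 1) →ₗ[R] X i)
    (hd : ∀ i, Function.Exact (d (i + 1)) (d i)) : ChainComplex (ModuleCat.{0} R) ℕ :=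
  ChainComplex.of (fun i => ModuleCat.of R (X i)) (fun i => ModuleCat.ofHom (d i))
    fun i => ModuleCat.hom_ext (hd i).linearMap_comp_eq_zero

lemma chainComplexOfExact_d (d : ∀ i, X (i + 1) →ₗ[R] X i)
    (hd : ∀ i, Function.Exact (d (i + 1)) (d i)) (i : ℕ) :
    (chainComplexOfExact d hd).d (i + 1) i = ModuleCat.ofHom (d i) := by
  change ChainComplex.of.d (fun i => ModuleCat.of R (X i)) (fun i => ModuleCat.ofHom (d i))
    (i + 1) i = _
  rw [ChainComplex.of_d]

/-- The projective resolution of `ModuleCat R` given by an exact sequence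
`⋯ → X 1 → X 0 → M → 0` of linear maps with projective `X i`. -/
noncomputable def projectiveResolutionOfExact [∀ i, Module.Projective R (X i)]
    (d : ∀ i, X (i + 1) →ₗ[R] X i) (p : X 0 →ₗ[R] M) (hp : Function.Surjective p)
    (hd₀ : Function.Exact (d 0) p) (hd : ∀ i, Function.Exact (d (i + 1)) (d i)) :
    ProjectiveResolution (ModuleCat.of R M) where
  complex := chainComplexOfExact d hd
  projective i := (IsProjective.iff_projective (R := R) (X i)).1 inferInstance
  π := (ChainComplex.toSingle₀Equiv _ _).symm ⟨ModuleCat.ofHom p, by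
    rw [chainComplexOfExact_d]
    exact ModuleCat.hom_ext hd₀.linearMap_comp_eq_zero⟩
  quasiIso := ⟨fun
    | 0 => by
      rw [ChainComplex.quasiIsoAt₀_iff, ShortComplex.quasiIso_iff_of_zeros' _ rfl rfl rfl]
      refine ⟨(ShortComplex.moduleCat_exact_iff _).2 fun z hz => ?_,
        (ModuleCat.epi_iff_surjective _).2 fun y => ?_⟩
      · obtain ⟨w, hw⟩ := (hd₀ z).1 (hz)
        exact ⟨w, (congrArg (fun q => q.hom w) (chainComplexOfExact_d d hd 0)).trans hw⟩
      · obtain ⟨w, hw⟩ := hp y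
        exact ⟨w, hw⟩
    | i + 1 => by
      rw [quasiIsoAt_iff_exactAt' _ _ (ChainComplex.exactAt_succ_single_obj _ _),
        HomologicalComplex.exactAt_iff' _ (i + 2) (i + 1) i (by simp) (by simp),
        ShortComplex.moduleCat_exact_iff]
      intro z hz
      obtain ⟨w, hw⟩ := (hd i z).1
        ((congrArg (fun q => q.hom z) (chainComplexOfExact_d d hd i)).symm.trans hz)
      exact ⟨w, (congrArg (fun q => q.hom w) (chainComplexOfExact_d d hd (i + 1))).trans hw⟩⟩

theorem subsingleton_extGrp_succ_iff [∀ i, Module.Projective R (X i)]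
    {d : ∀ i, X (i + 1) →ₗ[R] X i} {p : X 0 →ₗ[R] M} (hp : Function.Surjective p)
    (hd₀ : Function.Exact (d 0) p) (hd : ∀ i, Function.Exact (d (i + 1)) (d i)) (i : ℕ) :
    Subsingleton (ExtGrp R M N (i + 1)) ↔
      Function.Exact ((d i).lcomp R N) ((d (i + 1)).lcomp R N) := by
  have h := subsingleton_ext_succ_iff_of_projectiveResolution
    (projectiveResolutionOfExact d p hp hd₀ hd) (ModuleCat.of R N) i
  change _ ↔ Function.Exact (((chainComplexOfExact d hd).d (i + 1) i).hom.lcomp R N)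
    (((chainComplexOfExact d hd).d (i + 2) (i + 1)).hom.lcomp R N) at h
  rwa [chainComplexOfExact_d, chainComplexOfExact_d] at h

end ExtOfResolution

section ExactMatrices

variable {R : Type*} [CommRing R] {l m n : Type*} [Fintype l] [Fintype m] [Fintype n]

lemma exact_lcomp_mulVecLin_iff {A : Matrix m n R} {B : Matrix n l R} :
    Function.Exact (A.mulVecLin.lcomp R R) (B.mulVecLin.lcomp R R) ↔
      Function.Exact A.transpose.mulVecLin B.transpose.mulVecLin := by
  classical
  refine Function.Exact.iff_of_ladder_linearEquiv (e₁ := dotProductEquiv R m)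
    (e₂ := dotProductEquiv R n) (e₃ := dotProductEquiv R l) ?_ ?_ <;>
  · ext
    simp

end ExactMatrices

section PrincipalIdealDomain

variable {A : Type*} [CommRing A]

lemma baer_of_smul_surjective [IsPrincipalIdealRing A] {M : Type*} [AddCommGroup M] [Module A M]
    (h : ∀ a : A, a ≠ 0 → Function.Surjective fun m : M => a • m) : Module.Baer A M := by
  intro I g
  obtain ⟨a, rfl⟩ := IsPrincipalIdealRing.principal I
  obtain rfl | ha := eq_or_ne a 0
  · refine ⟨0, fun b hb => ?_⟩
    obtain rfl : b = 0 := by simpa using hb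
    exact (map_zero g).symm
  · obtain ⟨m, hm : a • m = _⟩ := h a ha (g ⟨a, Submodule.mem_span_singleton_self a⟩)
    refine ⟨LinearMap.toSpanSingleton A M m, fun b hb => ?_⟩
    obtain ⟨b, rfl⟩ := Submodule.mem_span_singleton.1 hb
    rw [LinearMap.toSpanSingleton_apply, smul_assoc, hm, ← map_smul g, SetLike.mk_smul_mk]

lemma smul_surjective_fractionRing [IsDomain A] {a : A} (ha : a ≠ 0) :
    Function.Surjective fun m : FractionRing A => a • m := fun m =>
  ⟨(algebraMap A (FractionRing A) a)⁻¹ * m, by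
    simp [Algebra.smul_def, ha]⟩

variable {P₀ P₁ P₂ P₃ : Type*} [AddCommGroup P₀] [AddCommGroup P₁] [AddCommGroup P₂]
  [AddCommGroup P₃] [Module A P₀] [Module A P₁] [Module A P₂] [Module A P₃]

lemma exists_comp_eq_of_ker_le_of_baer {D : Type*} [AddCommGroup D] [Module A D]
    (hD : Module.Baer A D) {d : P₁ →ₗ[A] P₀} {φ : P₁ →ₗ[A] D}
    (h : LinearMap.ker d ≤ LinearMap.ker φ) : ∃ ψ : P₀ →ₗ[A] D, ψ ∘ₗ d = φ := by
  obtain ⟨ψ, hψ⟩ := hD.extension_property ((LinearMap.ker d).liftQ d le_rfl)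
    (LinearMap.ker_eq_bot.1 (Submodule.ker_liftQ_eq_bot _ _ _ le_rfl))
    ((LinearMap.ker d).liftQ φ h)
  exact ⟨ψ, by rw [← Submodule.liftQ_mkQ (LinearMap.ker d) d le_rfl, ← LinearMap.comp_assoc, hψ,
    Submodule.liftQ_mkQ]⟩

-- `0 → A → Frac A → Frac A / A → 0` is an injective resolution of `A`.
theorem exact_lcomp_of_isPrincipalIdealRing [IsDomain A] [IsPrincipalIdealRing A]
    [Module.Projective A P₀] {d₁ : P₁ →ₗ[A] P₀} {d₂ : P₂ →ₗ[A] P₁} {d₃ : P₃ →ₗ[A] P₂}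
    (h₁ : Function.Exact d₂ d₁) (h₂ : Function.Exact d₃ d₂) :
    Function.Exact (d₂.lcomp A A) (d₃.lcomp A A) := by
  let ι : A →ₗ[A] FractionRing A := Algebra.linearMap A _
  have hι : Function.Injective ι := IsFractionRing.injective A _
  have baer_frac : Module.Baer A (FractionRing A) :=
    baer_of_smul_surjective fun _ => smul_surjective_fractionRing
  have baer_quot : Module.Baer A (FractionRing A ⧸ LinearMap.range ι) :=
    baer_of_smul_surjective fun a ha q => by
      obtain ⟨m, rfl⟩ := Submodule.mkQ_surjective _ q
      obtain ⟨m, rfl⟩ := smul_surjective_fractionRing ha m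
      exact ⟨Submodule.mkQ _ m, by simp only [map_smul]⟩
  refine Function.Exact.of_comp_of_mem_range ?_ fun f (hf : f ∘ₗ d₃ = 0) => ?_
  · ext g z
    simp [h₂.apply_apply_eq_zero]
  · obtain ⟨g, hg⟩ := exists_comp_eq_of_ker_le_of_baer baer_frac (d := d₂) (φ := ι ∘ₗ f) (by
      rw [h₂.linearMap_ker_eq]
      rintro _ ⟨w, rfl⟩
      simpa using congrArg ι (LinearMap.congr_fun hf w))
    obtain ⟨h, hh⟩ := exists_comp_eq_of_ker_le_of_baer baer_quot (d := d₁)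
      (φ := (LinearMap.range ι).mkQ ∘ₗ g) (by
        rw [h₁.linearMap_ker_eq]
        rintro _ ⟨w, rfl⟩
        exact (Submodule.Quotient.mk_eq_zero _).2 ⟨f w, (LinearMap.congr_fun hg w).symm⟩)
    obtain ⟨h', rfl⟩ := Module.projective_lifting_property (LinearMap.range ι).mkQ h
      (Submodule.mkQ_surjective _)
    have mem_range (z) : (g - h' ∘ₗ d₁) z ∈ LinearMap.range ι :=
      (Submodule.Quotient.eq _).1 (LinearMap.congr_fun hh z).symm
    refine ⟨(LinearEquiv.ofInjective ι hι).symm ∘ₗ (g - h' ∘ₗ d₁).codRestrict _ mem_range,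
      LinearMap.ext fun z => hι ?_⟩
    have hz : ι (((LinearEquiv.ofInjective ι hι).symm ∘ₗ (g - h' ∘ₗ d₁).codRestrict _ mem_range)
        (d₂ z)) = (g - h' ∘ₗ d₁) (d₂ z) :=
      congrArg Subtype.val ((LinearEquiv.ofInjective ι hι).apply_symm_apply _)
    exact hz.trans (by simpa [h₁.apply_apply_eq_zero] using LinearMap.congr_fun hg z)

end PrincipalIdealDomain

section FrobeniusExtension

variable {A S : Type*} [CommRing A] [CommRing S] [Algebra A S]

lemma projective_restrictScalars (A S P : Type*) [CommRing A] [CommRing S] [Algebra A S]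
    [Module.Free A S] [AddCommGroup P] [Module S P] [Module A P] [IsScalarTower A S P]
    [Module.Projective S P] : Module.Projective A P := by
  obtain ⟨s, hs⟩ := (Module.projective_def' (R := S) (P := P)).1 inferInstance
  have : Module.Projective A (P →₀ S) := inferInstance
  exact Module.Projective.of_split (s.restrictScalars A)
    ((Finsupp.linearCombination S id).restrictScalars A)
    (LinearMap.ext fun p => LinearMap.congr_fun hs p)

variable {P₀ P₁ P₂ P₃ : Type*} [AddCommGroup P₀] [AddCommGroup P₁] [AddCommGroup P₂]
  [AddCommGroup P₃] [Module S P₀] [Module S P₁] [Module S P₂] [Module S P₃]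

lemma exists_forall_trace_apply_eq {tr : S →ₗ[A] A}
    (htr : Function.Bijective ((LinearMap.mul A S).compr₂ tr)) [Module A P₁]
    [IsScalarTower A S P₁] (g : P₁ →ₗ[A] A) : ∃ f : P₁ →ₗ[S] S, ∀ p, tr (f p) = g p := by
  let e := LinearEquiv.ofBijective _ htr
  have tr_mul (p : P₁) (s : S) :
      tr (e.symm (g ∘ₗ (LinearMap.toSpanSingleton S P₁ p).restrictScalars A) * s) = g (s • p) :=
    LinearMap.congr_fun (e.apply_symm_apply _) s
  refine ⟨{
    toFun p := e.symm (g ∘ₗ (LinearMap.toSpanSingleton S P₁ p).restrictScalars A)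
    map_add' p q := htr.1 (LinearMap.ext fun s => ?_)
    map_smul' r p := htr.1 (LinearMap.ext fun s => ?_) }, fun p => ?_⟩
  · simp [tr_mul]
  · have hr : tr (r * (e.symm (g ∘ₗ (LinearMap.toSpanSingleton S P₁ p).restrictScalars A) * s)) =
        g (s • r • p) := by rw [mul_left_comm, tr_mul, mul_comm r, mul_smul]
    simpa [tr_mul, mul_assoc] using hr.symm
  · simpa using tr_mul p 1

theorem exact_lcomp_of_bijective_trace [IsDomain A] [IsPrincipalIdealRing A]
    [Module.Free A S] {tr : S →ₗ[A] A}
    (htr : Function.Bijective ((LinearMap.mul A S).compr₂ tr)) [Module.Projective S P₀]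
    {d₁ : P₁ →ₗ[S] P₀} {d₂ : P₂ →ₗ[S] P₁} {d₃ : P₃ →ₗ[S] P₂}
    (h₁ : Function.Exact d₂ d₁) (h₂ : Function.Exact d₃ d₂) :
    Function.Exact (d₂.lcomp S S) (d₃.lcomp S S) := by
  let _ : Module A P₀ := Module.compHom _ (algebraMap A S)
  let _ : Module A P₁ := Module.compHom _ (algebraMap A S)
  let _ : Module A P₂ := Module.compHom _ (algebraMap A S)
  let _ : Module A P₃ := Module.compHom _ (algebraMap A S)
  have : IsScalarTower A S P₀ := .of_compHom A S P₀
  have : IsScalarTower A S P₁ := .of_compHom A S P₁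
  have : IsScalarTower A S P₂ := .of_compHom A S P₂
  have : IsScalarTower A S P₃ := .of_compHom A S P₃
  have : Module.Projective A P₀ := projective_restrictScalars A S P₀
  refine Function.Exact.of_comp_of_mem_range ?_ fun f (hf : f ∘ₗ d₃ = 0) => ?_
  · ext g z
    simp [h₂.apply_apply_eq_zero]
  · obtain ⟨g, hg⟩ := (exact_lcomp_of_isPrincipalIdealRing (d₁ := d₁.restrictScalars A)
      (d₂ := d₂.restrictScalars A) (d₃ := d₃.restrictScalars A) h₁ h₂
      (tr ∘ₗ f.restrictScalars A)).1
        (LinearMap.ext fun z => (congrArg tr (LinearMap.congr_fun hf z)).trans (map_zero tr))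
    obtain ⟨F, hF⟩ := exists_forall_trace_apply_eq htr g
    refine ⟨F, LinearMap.ext fun p => htr.1 (LinearMap.ext fun s => ?_)⟩
    have hs : tr (F (d₂ (s • p))) = tr (f (s • p)) :=
      (hF _).trans (LinearMap.congr_fun hg (s • p))
    simpa [mul_comm s] using hs

end FrobeniusExtension

theorem hasFiniteSelfInjDim_of_bijective_trace {A S : Type} [CommRing A] [IsDomain A]
    [IsPrincipalIdealRing A] [CommRing S] [Algebra A S] [Module.Free A S]
    {tr : S →ₗ[A] A} (htr : Function.Bijective ((LinearMap.mul A S).compr₂ tr)) :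
    HasFiniteSelfInjDim S := by
  refine ⟨1, fun N i hi => ?_⟩
  obtain ⟨j, rfl⟩ : ∃ j, i = j + 1 + 1 := ⟨i - 2, by lia⟩
  let P := ProjectiveResolution.of N
  have : Module.Projective S (P.complex.X j) :=
    (IsProjective.iff_projective (R := S) (P.complex.X j)).2 (P.projective j)
  have exact_d (i : ℕ) : Function.Exact (P.complex.d (i + 2) (i + 1)).hom
      (P.complex.d (i + 1) i).hom :=
    (ShortComplex.ShortExact.moduleCat_exact_iff_function_exact _).1 (P.exact_succ i)
  exact (subsingleton_ext_succ_iff_of_projectiveResolution P _ (j + 1)).2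
    (exact_lcomp_of_bijective_trace htr (exact_d j) (exact_d (j + 1)))

section BasisModX

open Polynomial

variable {k M ι : Type*} [Field k] [AddCommGroup M] [Module k[X] M] [Module k M]
  [IsScalarTower k k[X] M] [Fintype ι]

-- Killing constant terms and cancelling `X`, the coefficients of a relation vanish one by one.
lemma linearIndependent_polynomial_of_mod_X (hX : Function.Injective fun m : M => (X : k[X]) • m)
    {v : ι → M} (hv : ∀ c : ι → k, (∃ m : M, ∑ i, c i • v i = (X : k[X]) • m) → c = 0) :
    LinearIndependent k[X] v := by
  have sum_eq (f : ι → k[X]) :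
      ∑ i, f i • v i = (X : k[X]) • ∑ i, (f i).divX • v i + ∑ i, (f i).coeff 0 • v i := by
    rw [Finset.smul_sum, ← Finset.sum_add_distrib]
    refine Finset.sum_congr rfl fun i _ => ?_
    rw [smul_smul, ← algebraMap_smul k[X] ((f i).coeff 0), ← add_smul, algebraMap_eq,
      X_mul_divX_add]
  have coeff_eq (j : ℕ) : ∀ f : ι → k[X], ∑ i, f i • v i = 0 → ∀ i, (f i).coeff j = 0 := by
    have coeff_zero (f : ι → k[X]) (hf : ∑ i, f i • v i = 0) : (fun i => (f i).coeff 0) = 0 :=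
      hv _ ⟨-∑ i, (f i).divX • v i, by
        rw [smul_neg, eq_neg_iff_add_eq_zero, add_comm, ← sum_eq, hf]⟩
    induction j with
    | zero => exact fun f hf i => congrFun (coeff_zero f hf) i
    | succ j ih =>
      intro f hf i
      rw [← coeff_divX]
      refine ih (fun i => (f i).divX) (hX ?_) i
      have := sum_eq f
      simp only [congrFun (coeff_zero f hf) _, Pi.zero_apply, zero_smul, Finset.sum_const_zero,
        add_zero, hf] at this
      simpa using this.symm
  exact Fintype.linearIndependent_iff.2 fun f hf i => Polynomial.ext fun j => coeff_eq j f hf i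

variable {S : Type*} [CommRing S] [Algebra k S] [Algebra k[X] S] [IsScalarTower k k[X] S]
  (𝒮 : ℕ → Submodule k S) [GradedAlgebra 𝒮] {v : ι → S} {deg : ι → ℕ}

lemma span_polynomial_eq_top_of_homogeneous (hX : algebraMap k[X] S X ∈ 𝒮 1)
    (hv : ∀ i, v i ∈ 𝒮 (deg i))
    (hspan : ∀ s, ∃ c : ι → k, ∃ t, s = ∑ i, c i • v i + (X : k[X]) • t) :
    Submodule.span k[X] (Set.range v) = ⊤ := by
  have component_mem (c : ι → k) (d : ℕ) :
      (DirectSum.decompose 𝒮 (∑ i, c i • v i) d : S) ∈ Submodule.span k[X] (Set.range v) := by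
    rw [DirectSum.decompose_sum, DFinsupp.finsetSum_apply, AddSubmonoidClass.coe_finsetSum]
    refine Submodule.sum_mem _ fun i _ => ?_
    by_cases hd : deg i = d
    · subst hd
      rw [DirectSum.decompose_of_mem_same 𝒮 (Submodule.smul_mem _ _ (hv i)),
        ← algebraMap_smul k[X] (c i)]
      exact Submodule.smul_mem _ _ (Submodule.subset_span ⟨i, rfl⟩)
    · rw [DirectSum.decompose_of_mem_ne 𝒮 (Submodule.smul_mem _ _ (hv i)) hd]
      exact Submodule.zero_mem _
  have homogeneous_mem (d : ℕ) : ∀ s ∈ 𝒮 d, s ∈ Submodule.span k[X] (Set.range v) := by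
    induction d with
    | zero =>
      intro s hs
      obtain ⟨c, t, hct⟩ := hspan s
      have key := congrArg (fun z => (DirectSum.decompose 𝒮 z 0 : S)) hct
      simp only [DirectSum.decompose_add, DirectSum.add_apply, Submodule.coe_add,
        DirectSum.decompose_of_mem_same 𝒮 hs, Algebra.smul_def X,
        DirectSum.coe_decompose_mul_of_left_mem_of_not_le 𝒮 hX (by lia : ¬ 1 ≤ 0), add_zero] at key
      exact key ▸ component_mem c 0
    | succ d ih =>
      intro s hs
      obtain ⟨c, t, hct⟩ := hspan s
      have key := congrArg (fun z => (DirectSum.decompose 𝒮 z (1 + d) : S)) hct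
      simp only [DirectSum.decompose_add, DirectSum.add_apply, Submodule.coe_add,
        DirectSum.decompose_of_mem_same 𝒮 (add_comm d 1 ▸ hs), Algebra.smul_def X,
        DirectSum.coe_decompose_mul_add_of_left_mem 𝒮 hX] at key
      rw [key, ← Algebra.smul_def]
      exact Submodule.add_mem _ (component_mem c _)
        (Submodule.smul_mem _ _ (ih _ (SetLike.coe_mem _)))
  classical
  refine eq_top_iff.2 fun s _ => ?_
  rw [← DirectSum.sum_support_decompose 𝒮 s]
  exact Submodule.sum_mem _ fun d _ => homogeneous_mem d _ (SetLike.coe_mem _)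

end BasisModX

section FrobeniusBasis

variable {A S : Type} [CommRing A] [IsDomain A] [IsPrincipalIdealRing A] [CommRing S] [Algebra A S]

theorem hasFiniteSelfInjDim_of_basis_one (b : Module.Basis (Fin 1) A S) (hb : b 0 = 1) :
    HasFiniteSelfInjDim S := by
  have : Module.Free A S := .of_basis b
  refine hasFiniteSelfInjDim_of_bijective_trace (tr := b.coord 0)
    ⟨fun t t' h => b.ext_elem fun i => ?_, fun g => ⟨g 1 • 1, b.ext fun i => ?_⟩⟩
  · simpa [Subsingleton.elim i 0] using LinearMap.congr_fun h 1
  · obtain rfl := Subsingleton.elim i 0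
    have repr_one : b.repr 1 0 = 1 := by rw [← hb, b.repr_self, Finsupp.single_eq_same]
    simp [hb, repr_one]

-- If `y² = α + βy`, then the `y`-coordinate of the product has Gram matrix `!![0, 1; 1, β]` in the
-- basis `1, y`.
theorem hasFiniteSelfInjDim_of_basis_one_pair (b : Module.Basis (Fin 2) A S) (hb : b 0 = 1) :
    HasFiniteSelfInjDim S := by
  have : Module.Free A S := .of_basis b
  have gram_zero (t : S) : b.coord 1 (t * b 0) = b.repr t 1 := by simp [hb]
  have gram_one (t : S) :
      b.coord 1 (t * b 1) = b.repr t 0 + b.repr t 1 * b.repr (b 1 * b 1) 1 := by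
    have mul_eq : t * b 1 = b.repr t 0 • b 1 + b.repr t 1 • (b 1 * b 1) := by
      conv_lhs => rw [← b.sum_repr t, Fin.sum_univ_two, hb, add_mul, smul_mul_assoc,
        smul_mul_assoc, one_mul]
    simp [mul_eq]
  refine hasFiniteSelfInjDim_of_bijective_trace (tr := b.coord 1)
    ⟨(injective_iff_map_eq_zero _).2 fun t ht => b.ext_elem fun i => ?_, fun g =>
      ⟨(g (b 1) - g (b 0) * b.repr (b 1 * b 1) 1) • b 0 + g (b 0) • b 1, b.ext fun i => ?_⟩⟩
  · have h₁ : b.repr t 1 = 0 := (gram_zero t).symm.trans (LinearMap.congr_fun ht (b 0))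
    have h₀ := (gram_one t).symm.trans (LinearMap.congr_fun ht (b 1))
    rw [h₁, zero_mul, add_zero] at h₀
    match i with
    | 0 => simpa using h₀
    | 1 => simpa using h₁
  · fin_cases i
    · exact (gram_zero _).trans (by simp)
    · exact (gram_one _).trans (by simp)

end FrobeniusBasis

/-- The properties of a one-dimensional homogeneous ring of minimal multiplicity, with irrelevant
ideal `n` and minimal reduction `x`, that the argument needs. The last field encodes that the ring
is not Gorenstein: `n / xS`, the socle of `S / xS`, has dimension at least two over `S / n`. -/
structure IsNonGorensteinMinMult {S : Type*} [CommRing S] (n : Ideal S) (x : S) : Prop where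
  isMaximal : n.IsMaximal
  fg : n.FG
  mem_nonZeroDivisors : x ∈ nonZeroDivisors S
  mem : x ∈ n
  span_mul_eq_sq : Ideal.span {x} * n = n ^ 2
  exists_pair : ∃ y₁ ∈ n, ∃ y₂ ∈ n, ∀ s t : S, s * y₁ + t * y₂ ∈ Ideal.span {x} → s ∈ n ∧ t ∈ n

lemma eq_zero_of_algebraMap_mem {k S : Type*} [Field k] [CommRing S] [Algebra k S] {n : Ideal S}
    (hn : n ≠ ⊤) {c : k} (hc : algebraMap k S c ∈ n) : c = 0 := by
  by_contra h
  exact hn (n.eq_top_of_isUnit_mem hc ((IsUnit.mk0 c h).map _))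

section StandardGraded

open Polynomial

section Irrelevant

variable {k S : Type*} [Field k] [CommRing S] [Algebra k S] (𝒮 : ℕ → Submodule k S)
  [GradedAlgebra 𝒮]

lemma exists_sub_algebraMap_mem_irrelevant (h₀ : 𝒮 0 = 1) (s : S) :
    ∃ c : k, s - algebraMap k S c ∈ (HomogeneousIdeal.irrelevant 𝒮).toIdeal := by
  obtain ⟨c, hc⟩ := Submodule.mem_one.1 (h₀.le (DirectSum.decompose 𝒮 s 0).2)
  refine ⟨c, (HomogeneousIdeal.mem_irrelevant_iff 𝒮 _).2 ?_⟩
  rw [GradedRing.proj_apply, DirectSum.decompose_sub, DirectSum.sub_apply,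
    AddSubgroupClass.coe_sub,
    DirectSum.decompose_of_mem_same 𝒮 (SetLike.algebraMap_mem_graded 𝒮 c), hc, sub_self]

lemma irrelevant_ne_top [Nontrivial S] : (HomogeneousIdeal.irrelevant 𝒮).toIdeal ≠ ⊤ := by
  rw [Ideal.ne_top_iff_one]
  intro h
  have := (HomogeneousIdeal.mem_irrelevant_iff 𝒮 (1 : S)).1 h
  rw [GradedRing.proj_apply, DirectSum.decompose_of_mem_same 𝒮 SetLike.GradedOne.one_mem] at this
  exact one_ne_zero this

lemma irrelevant_isMaximal [Nontrivial S] (h₀ : 𝒮 0 = 1) :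
    (HomogeneousIdeal.irrelevant 𝒮).toIdeal.IsMaximal := by
  refine Ideal.isMaximal_iff.2 ⟨(Ideal.ne_top_iff_one _).1 (irrelevant_ne_top 𝒮),
    fun J s hJ hs hsJ => ?_⟩
  obtain ⟨c, hc⟩ := exists_sub_algebraMap_mem_irrelevant 𝒮 h₀ s
  have c_ne_zero : c ≠ 0 := by
    rintro rfl
    exact hs (by simpa using hc)
  have c_mem : algebraMap k S c ∈ J := by simpa using J.sub_mem hsJ (hJ hc)
  exact (Ideal.eq_top_iff_one J).1
    (J.eq_top_of_isUnit_mem c_mem ((IsUnit.mk0 c c_ne_zero).map _))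

lemma mem_irrelevant_of_mem_one {s : S} (hs : s ∈ 𝒮 1) :
    s ∈ (HomogeneousIdeal.irrelevant 𝒮).toIdeal :=
  HomogeneousIdeal.mem_irrelevant_of_mem 𝒮 one_pos hs

lemma irrelevant_eq_span_one [Nontrivial S] (hgen : Algebra.adjoin k (𝒮 1 : Set S) = ⊤) :
    (HomogeneousIdeal.irrelevant 𝒮).toIdeal = Ideal.span (𝒮 1 : Set S) := by
  have span_le : Ideal.span (𝒮 1 : Set S) ≤ (HomogeneousIdeal.irrelevant 𝒮).toIdeal :=
    Ideal.span_le.2 fun _ => mem_irrelevant_of_mem_one 𝒮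
  refine le_antisymm (fun s hs => ?_) span_le
  have adjoin_le : Algebra.adjoin k (𝒮 1 : Set S) ≤ (⊥ : Subalgebra k _).comap
      (Ideal.Quotient.mkₐ k (Ideal.span (𝒮 1 : Set S))) := Algebra.adjoin_le fun v hv => by
    rw [Subalgebra.coe_comap, Set.mem_preimage, Ideal.Quotient.mkₐ_eq_mk,
      Ideal.Quotient.eq_zero_iff_mem.2 (Ideal.subset_span hv)]
    exact zero_mem _
  obtain ⟨c, hc⟩ := Algebra.mem_bot.1 (adjoin_le (hgen ▸ Algebra.mem_top : s ∈ _))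
  have sub_mem : algebraMap k S c - s ∈ Ideal.span (𝒮 1 : Set S) := Ideal.Quotient.eq.1 hc
  have c_eq : c = 0 := eq_zero_of_algebraMap_mem (irrelevant_ne_top 𝒮)
    ((Submodule.sub_mem_iff_left _ hs).1 (span_le sub_mem))
  simpa [c_eq] using sub_mem

lemma irrelevant_fg [Nontrivial S] (hgen : Algebra.adjoin k (𝒮 1 : Set S) = ⊤)
    [FiniteDimensional k (𝒮 1)] : (HomogeneousIdeal.irrelevant 𝒮).toIdeal.FG := by
  obtain ⟨t, ht⟩ := Module.Finite.iff_fg.1 (inferInstance : FiniteDimensional k (𝒮 1))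
  refine ⟨t, ?_⟩
  rw [irrelevant_eq_span_one 𝒮 hgen, ← ht]
  exact (Submodule.span_span_of_tower ..).symm

lemma exists_add_mul_of_mem_irrelevant [Nontrivial S] (h₀ : 𝒮 0 = 1)
    (hgen : Algebra.adjoin k (𝒮 1 : Set S) = ⊤) {x : S}
    (hx : (HomogeneousIdeal.irrelevant 𝒮).toIdeal ^ 2 ≤ Ideal.span {x}) {s : S}
    (hs : s ∈ (HomogeneousIdeal.irrelevant 𝒮).toIdeal) :
    ∃ v ∈ 𝒮 1, s - v ∈ Ideal.span {x} := by
  rw [irrelevant_eq_span_one 𝒮 hgen] at hs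
  induction hs using Submodule.span_induction with
  | mem v hv => exact ⟨v, hv, by simp⟩
  | zero => exact ⟨0, zero_mem _, by simp⟩
  | add s t _ _ hs ht =>
    obtain ⟨v, hv, hsv⟩ := hs
    obtain ⟨w, hw, htw⟩ := ht
    exact ⟨v + w, add_mem hv hw, by simpa [add_sub_add_comm] using add_mem hsv htw⟩
  | smul a s _ hs =>
    obtain ⟨v, hv, hsv⟩ := hs
    obtain ⟨c, hc⟩ := exists_sub_algebraMap_mem_irrelevant 𝒮 h₀ a
    have hav : (a - algebraMap k S c) * v ∈ Ideal.span {x} :=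
      hx (pow_two (HomogeneousIdeal.irrelevant 𝒮).toIdeal ▸
        Ideal.mul_mem_mul hc (mem_irrelevant_of_mem_one 𝒮 hv))
    refine ⟨c • v, Submodule.smul_mem _ _ hv, ?_⟩
    convert add_mem (Ideal.mul_mem_left _ a hsv) hav using 1
    rw [Algebra.smul_def c, smul_eq_mul]
    ring

end Irrelevant

section Gorenstein

variable {k S : Type} [Field k] [CommRing S] [Algebra k S] [Algebra k[X] S]
  [IsScalarTower k k[X] S] (𝒮 : ℕ → Submodule k S) [GradedAlgebra 𝒮]

lemma exists_basis_polynomial_of_homogeneous {ι : Type*} [Fintype ι] {v : ι → S} {deg : ι → ℕ}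
    (hX : algebraMap k[X] S X ∈ 𝒮 1) (hnzd : algebraMap k[X] S X ∈ nonZeroDivisors S)
    (hv : ∀ i, v i ∈ 𝒮 (deg i))
    (hli : ∀ c : ι → k, ∑ i, c i • v i ∈ Ideal.span {algebraMap k[X] S X} → c = 0)
    (hspan : ∀ s, ∃ c : ι → k, s - ∑ i, c i • v i ∈ Ideal.span {algebraMap k[X] S X}) :
    ∃ b : Module.Basis ι k[X] S, ⇑b = v := by
  have smul_injective : Function.Injective fun s : S => (X : k[X]) • s := fun s t h => by
    simpa [Algebra.smul_def, mul_cancel_left_mem_nonZeroDivisors hnzd] using h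
  have mem_span {s : S} : s ∈ Ideal.span {algebraMap k[X] S X} ↔ ∃ t, s = (X : k[X]) • t := by
    simp [Ideal.mem_span_singleton, dvd_def, Algebra.smul_def]
  refine ⟨.mk (v := v) (linearIndependent_polynomial_of_mod_X smul_injective fun c hc =>
      hli c (mem_span.2 hc)) (span_polynomial_eq_top_of_homogeneous 𝒮 hX hv fun s => ?_).ge,
    Module.Basis.coe_mk _ _⟩
  obtain ⟨c, hc⟩ := hspan s
  obtain ⟨t, ht⟩ := mem_span.1 hc
  exact ⟨c, t, by rw [← ht, add_sub_cancel]⟩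

variable {𝒮} [Nontrivial S]

lemma hasFiniteSelfInjDim_of_irrelevant_le_span (h₀ : 𝒮 0 = 1) (hX : algebraMap k[X] S X ∈ 𝒮 1)
    (hnzd : algebraMap k[X] S X ∈ nonZeroDivisors S)
    (hn : (HomogeneousIdeal.irrelevant 𝒮).toIdeal ≤ Ideal.span {algebraMap k[X] S X}) :
    HasFiniteSelfInjDim S := by
  have span_le := (Ideal.span_singleton_le_iff_mem _).2 (mem_irrelevant_of_mem_one 𝒮 hX)
  obtain ⟨b, hb⟩ := exists_basis_polynomial_of_homogeneous 𝒮 (v := fun _ : Fin 1 => 1)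
    (deg := fun _ => 0) hX hnzd (fun _ => SetLike.GradedOne.one_mem)
    (fun c hc => funext fun i => eq_zero_of_algebraMap_mem (irrelevant_ne_top 𝒮) (span_le (by
      simpa [Subsingleton.elim i 0, Algebra.smul_def] using hc)))
    (fun s => by
      obtain ⟨c, hc⟩ := exists_sub_algebraMap_mem_irrelevant 𝒮 h₀ s
      exact ⟨fun _ => c, hn (by simpa [Algebra.smul_def] using hc)⟩)
  exact hasFiniteSelfInjDim_of_basis_one b (congrFun hb 0)

lemma hasFiniteSelfInjDim_of_irrelevant_le_span_pair (h₀ : 𝒮 0 = 1)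
    (hX : algebraMap k[X] S X ∈ 𝒮 1) (hnzd : algebraMap k[X] S X ∈ nonZeroDivisors S) {y : S}
    (hy : y ∈ 𝒮 1) (hli : ∀ b : k, b • y ∈ Ideal.span {algebraMap k[X] S X} → b = 0)
    (hn : ∀ z ∈ (HomogeneousIdeal.irrelevant 𝒮).toIdeal,
      ∃ b : k, z - b • y ∈ Ideal.span {algebraMap k[X] S X}) :
    HasFiniteSelfInjDim S := by
  have span_le := (Ideal.span_singleton_le_iff_mem _).2 (mem_irrelevant_of_mem_one 𝒮 hX)
  obtain ⟨b, hb⟩ := exists_basis_polynomial_of_homogeneous 𝒮 (v := ![1, y]) (deg := ![0, 1])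
    hX hnzd (Fin.forall_fin_two.2 ⟨SetLike.GradedOne.one_mem, hy⟩)
    (fun c hc => by
      have hc : algebraMap k S (c 0) + c 1 • y ∈ Ideal.span {algebraMap k[X] S X} := by
        simpa [Fin.sum_univ_two, Algebra.smul_def] using hc
      have hc₀ : c 0 = 0 := eq_zero_of_algebraMap_mem (irrelevant_ne_top 𝒮)
        ((Submodule.add_mem_iff_left _
          (Submodule.smul_of_tower_mem _ _ (mem_irrelevant_of_mem_one 𝒮 hy))).1 (span_le hc))
      rw [hc₀, map_zero, zero_add] at hc
      exact funext (Fin.forall_fin_two.2 ⟨hc₀, hli _ hc⟩))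
    (fun s => by
      obtain ⟨c, hc⟩ := exists_sub_algebraMap_mem_irrelevant 𝒮 h₀ s
      obtain ⟨d, hd⟩ := hn _ hc
      exact ⟨![c, d], by simpa [Fin.sum_univ_two, Algebra.smul_def, sub_sub] using hd⟩)
  exact hasFiniteSelfInjDim_of_basis_one_pair b (congrFun hb 0)

end Gorenstein

variable {k S : Type} [Field k] [CommRing S] [Algebra k S] {𝒮 : ℕ → Submodule k S}
  [GradedAlgebra 𝒮]

lemma exists_pair_of_not_hasFiniteSelfInjDim [Nontrivial S] (h₀ : 𝒮 0 = 1)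
    (hgen : Algebra.adjoin k (𝒮 1 : Set S) = ⊤) (hng : ¬ HasFiniteSelfInjDim S) {x : S}
    (hx : x ∈ 𝒮 1) (hnzd : x ∈ nonZeroDivisors S)
    (hsq : (HomogeneousIdeal.irrelevant 𝒮).toIdeal ^ 2 ≤ Ideal.span {x}) :
    ∃ y₁ ∈ (HomogeneousIdeal.irrelevant 𝒮).toIdeal,
      ∃ y₂ ∈ (HomogeneousIdeal.irrelevant 𝒮).toIdeal, ∀ a b : k,
        a • y₁ + b • y₂ ∈ Ideal.span {x} → a = 0 ∧ b = 0 := by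
  let _ : Algebra k[X] S := (aeval (R := k) x).toAlgebra
  have : IsScalarTower k k[X] S := .of_algebraMap_eq fun c => (aeval_C x c).symm
  have hX : algebraMap k[X] S X = x := aeval_X x
  have eq_zero_of_smul_mem {b : k} {z : S} (hz : z ∉ Ideal.span {x})
      (hbz : b • z ∈ Ideal.span {x}) : b = 0 := by
    by_contra hb
    exact hz ((Submodule.smul_mem_iff' _ (Units.mk0 b hb)).1 hbz)
  obtain ⟨z, hz, hzx⟩ : ∃ z ∈ (HomogeneousIdeal.irrelevant 𝒮).toIdeal, z ∉ Ideal.span {x} := by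
    by_contra! hle
    exact hng (hasFiniteSelfInjDim_of_irrelevant_le_span h₀ (hX ▸ hx) (hX ▸ hnzd)
      fun z hz => hX.symm ▸ hle z hz)
  obtain ⟨y, hy, hzy⟩ := exists_add_mul_of_mem_irrelevant 𝒮 h₀ hgen hsq hz
  have hyx : y ∉ Ideal.span {x} := fun h => hzx ((Submodule.sub_mem_iff_left _ h).1 hzy)
  obtain ⟨w, hw, hwy⟩ : ∃ w ∈ (HomogeneousIdeal.irrelevant 𝒮).toIdeal,
      ∀ b : k, w - b • y ∉ Ideal.span {x} := by
    by_contra! hle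
    exact hng (hasFiniteSelfInjDim_of_irrelevant_le_span_pair h₀ (hX ▸ hx) (hX ▸ hnzd) hy
      (fun b hb => eq_zero_of_smul_mem hyx (hX ▸ hb)) fun z hz => hX.symm ▸ hle z hz)
  refine ⟨y, mem_irrelevant_of_mem_one 𝒮 hy, w, hw, fun a b hab => ?_⟩
  have hb : b = 0 := by
    by_contra hb
    refine hwy (-(b⁻¹ * a)) ?_
    have := Submodule.smul_of_tower_mem (Ideal.span {x}) b⁻¹ hab
    rwa [smul_add, smul_smul, smul_smul, inv_mul_cancel₀ hb, one_smul, add_comm,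
      ← sub_neg_eq_add, ← neg_smul] at this
  subst hb
  exact ⟨eq_zero_of_smul_mem hyx (by simpa using hab), rfl⟩

theorem isNonGorensteinMinMult_irrelevant [Nontrivial S] (hSG : IsStandardGraded k S 𝒮)
    (hng : ¬ HasFiniteSelfInjDim S) {x : S} (hx : x ∈ 𝒮 1) (hnzd : x ∈ nonZeroDivisors S)
    (hMM : Ideal.span {x} * (HomogeneousIdeal.irrelevant 𝒮).toIdeal =
      (HomogeneousIdeal.irrelevant 𝒮).toIdeal ^ 2) :
    IsNonGorensteinMinMult (HomogeneousIdeal.irrelevant 𝒮).toIdeal x where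
  isMaximal := irrelevant_isMaximal 𝒮 hSG.1
  fg := have := hSG.2.2 1; irrelevant_fg 𝒮 hSG.2.1
  mem_nonZeroDivisors := hnzd
  mem := mem_irrelevant_of_mem_one 𝒮 hx
  span_mul_eq_sq := hMM
  exists_pair := by
    have sq_le := hMM.symm.le.trans (Ideal.mul_le_inf.trans inf_le_left)
    obtain ⟨y₁, hy₁, y₂, hy₂, h⟩ :=
      exists_pair_of_not_hasFiniteSelfInjDim hSG.1 hSG.2.1 hng hx hnzd sq_le
    refine ⟨y₁, hy₁, y₂, hy₂, fun s t hst => ?_⟩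
    obtain ⟨a, ha⟩ := exists_sub_algebraMap_mem_irrelevant 𝒮 hSG.1 s
    obtain ⟨b, hb⟩ := exists_sub_algebraMap_mem_irrelevant 𝒮 hSG.1 t
    have sub_mem : (s - algebraMap k S a) * y₁ + (t - algebraMap k S b) * y₂ ∈ Ideal.span {x} :=
      sq_le <| pow_two (HomogeneousIdeal.irrelevant 𝒮).toIdeal ▸
        add_mem (Ideal.mul_mem_mul ha hy₁) (Ideal.mul_mem_mul hb hy₂)
    obtain ⟨rfl, rfl⟩ := h a b <| by
      convert Ideal.sub_mem _ hst sub_mem using 1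
      rw [Algebra.smul_def, Algebra.smul_def]
      ring
    rw [map_zero, sub_zero] at ha hb
    exact ⟨ha, hb⟩

end StandardGraded

section TotallyExact

/-- A pair of square matrices forming, by splicing, a `2`-periodic complex of free modules that is
exact and has exact dual: a complete resolution of the cokernel of `A`. -/
structure IsTotallyExactPair {R ι : Type*} [CommRing R] [Fintype ι] (A B : Matrix ι ι R) :
    Prop where
  exact_left : Function.Exact B.mulVecLin A.mulVecLin
  exact_right : Function.Exact A.mulVecLin B.mulVecLin
  exact_transpose_left : Function.Exact B.transpose.mulVecLin A.transpose.mulVecLin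
  exact_transpose_right : Function.Exact A.transpose.mulVecLin B.transpose.mulVecLin

namespace IsTotallyExactPair

lemma transpose {R ι : Type*} [CommRing R] [Fintype ι] {A B : Matrix ι ι R}
    (h : IsTotallyExactPair A B) : IsTotallyExactPair A.transpose B.transpose :=
  ⟨h.exact_transpose_left, h.exact_transpose_right, h.exact_left, h.exact_right⟩

section Pairing

variable {R ι M N : Type*} [CommRing R] [Fintype ι] [AddCommGroup M] [Module R M]
  [AddCommGroup N] [Module R N] {A B : Matrix ι ι R}
  {p : (ι → R) →ₗ[R] M} {q : (ι → R) →ₗ[R] N}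

lemma bijective_of_apply_eq_dotProduct (h : IsTotallyExactPair A B)
    (hp : Function.Surjective p) (hpA : Function.Exact A.mulVecLin p)
    (hq : Function.Surjective q) (hqA : Function.Exact A.transpose.mulVecLin q)
    {b : M →ₗ[R] N →ₗ[R] R} (hb : ∀ y z, b (p y) (q z) = B.mulVec y ⬝ᵥ z) :
    Function.Bijective b := by
  classical
  refine ⟨(injective_iff_map_eq_zero b).2 fun u hu => ?_, fun φ => ?_⟩
  · obtain ⟨y, rfl⟩ := hp u
    exact (hpA y).2 ((h.exact_right y).1 (dotProduct_eq_zero _ fun z => by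
      rw [Matrix.mulVecLin_apply, ← hb, hu, LinearMap.zero_apply]))
  · obtain ⟨c, hc⟩ := (dotProductEquiv R ι).surjective (φ ∘ₗ q)
    replace hc (z : ι → R) : c ⬝ᵥ z = φ (q z) := LinearMap.congr_fun hc z
    obtain ⟨y, rfl⟩ := (h.exact_left c).1 <| dotProduct_eq_zero _ fun z => by
      rw [Matrix.mulVecLin_apply, ← Matrix.vecMul_transpose, ← Matrix.dotProduct_mulVec, hc,
        ← Matrix.mulVecLin_apply, hqA.apply_apply_eq_zero, map_zero]
    refine ⟨p y, LinearMap.ext fun t => ?_⟩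
    obtain ⟨z, rfl⟩ := hq t
    exact (hb y z).trans (hc z)

lemma exists_apply_eq_dotProduct (h : IsTotallyExactPair A B) :
    ∃ b : ((ι → R) ⧸ LinearMap.range A.mulVecLin) →ₗ[R]
        ((ι → R) ⧸ LinearMap.range A.transpose.mulVecLin) →ₗ[R] R,
      ∀ y z, b (Submodule.mkQ _ y) (Submodule.mkQ _ z) = B.mulVec y ⬝ᵥ z := by
  let β : (ι → R) →ₗ[R] (ι → R) →ₗ[R] R := dotProductBilin R R ∘ₗ B.mulVecLin
  have hβ (y z : ι → R) : β y z = B.mulVec y ⬝ᵥ z := rfl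
  have range_le : LinearMap.range A.transpose.mulVecLin ≤ LinearMap.ker β.flip := by
    rintro _ ⟨z, rfl⟩
    refine LinearMap.ext fun y => ?_
    have := h.exact_left.apply_apply_eq_zero y
    simp only [Matrix.mulVecLin_apply] at this
    simp [hβ, dotProduct_comm _ (Matrix.vecMul z A),
      ← Matrix.dotProduct_mulVec, this]
  refine ⟨Submodule.liftQ _ (Submodule.liftQ _ β.flip range_le).flip ?_, fun y z => rfl⟩
  rintro _ ⟨y, rfl⟩
  refine LinearMap.ext fun t => ?_
  obtain ⟨z, rfl⟩ := Submodule.mkQ_surjective _ t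
  have := h.exact_right.apply_apply_eq_zero y
  simp only [Matrix.mulVecLin_apply] at this
  simp [hβ, this]

end Pairing

variable {R ι M : Type} [CommRing R] [Fintype ι] [AddCommGroup M] [Module R M] {A B : Matrix ι ι R}

lemma subsingleton_extGrp (h : IsTotallyExactPair A B) {p : (ι → R) →ₗ[R] M}
    (hp : Function.Surjective p) (hpA : Function.Exact A.mulVecLin p) {i : ℕ} (hi : 0 < i) :
    Subsingleton (ExtGrp R M R i) := by
  classical
  obtain ⟨i, rfl⟩ := Nat.exists_eq_succ_of_ne_zero hi.ne'
  let D (i : ℕ) : Matrix ι ι R := if Even i then A else B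
  have exact_D (i : ℕ) : Function.Exact (D (i + 1)).mulVecLin (D i).mulVecLin := by
    rcases Nat.even_or_odd i with hi | hi
    · simpa [D, hi, Nat.even_add_one] using h.exact_left
    · simpa [D, Nat.not_even_iff_odd.2 hi, Nat.even_add_one] using h.exact_right
  have exact_transpose_D (i : ℕ) :
      Function.Exact (D i).transpose.mulVecLin (D (i + 1)).transpose.mulVecLin := by
    rcases Nat.even_or_odd i with hi | hi
    · simpa [D, hi, Nat.even_add_one] using h.exact_transpose_right
    · simpa [D, Nat.not_even_iff_odd.2 hi, Nat.even_add_one] using h.exact_transpose_left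
  exact (subsingleton_extGrp_succ_iff (X := fun _ => ι → R) (d := fun i => (D i).mulVecLin)
    hp hpA exact_D i).2 (exact_lcomp_mulVecLin_iff.2 (exact_transpose_D i))

theorem gDimZero_quotient_range (h : IsTotallyExactPair A B) :
    GDimZero R ((ι → R) ⧸ LinearMap.range A.mulVecLin) := by
  obtain ⟨b, hb⟩ := h.exists_apply_eq_dotProduct
  have exact_mkQ (A : Matrix ι ι R) :
      Function.Exact A.mulVecLin (LinearMap.range A.mulVecLin).mkQ :=
    LinearMap.exact_map_mkQ_range _
  have mkQ_surjective (A : Matrix ι ι R) :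
      Function.Surjective (LinearMap.range A.mulVecLin).mkQ := Submodule.mkQ_surjective _
  have bij_flip : Function.Bijective b.flip :=
    h.transpose.bijective_of_apply_eq_dotProduct (mkQ_surjective _) (exact_mkQ _)
      (mkQ_surjective A) (exact_mkQ A) fun z y => by
        rw [LinearMap.flip_apply, hb, Matrix.mulVec_transpose, ← Matrix.dotProduct_mulVec,
          dotProduct_comm]
  have : b.IsPerfPair := ⟨h.bijective_of_apply_eq_dotProduct (mkQ_surjective _) (exact_mkQ _)
    (mkQ_surjective _) (exact_mkQ _) hb, bij_flip⟩
  refine ⟨(Module.IsReflexive.of_isPerfPair b).bijective_dual_eval', fun i hi =>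
    h.subsingleton_extGrp (mkQ_surjective _) (exact_mkQ _) hi, fun i hi =>
    h.transpose.subsingleton_extGrp (bij_flip.surjective.comp (mkQ_surjective _))
      (p := b.flip ∘ₗ Submodule.mkQ _) (fun z => ?_) hi⟩
  rw [LinearMap.comp_apply, map_eq_zero_iff _ bij_flip.injective]
  exact exact_mkQ _ z

end IsTotallyExactPair

/-- A matrix factorization of `a`: two square matrices with `D * D' = D' * D = a • 1`. -/
structure IsMatrixFactorization {S ι : Type*} [CommRing S] [Fintype ι] [DecidableEq ι] (a : S)
    (D D' : Matrix ι ι S) : Prop where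
  mul_eq : D * D' = a • 1
  mul_eq' : D' * D = a • 1

namespace IsMatrixFactorization

variable {S R ι : Type*} [CommRing S] [CommRing R] [Algebra S R] [Fintype ι] [DecidableEq ι]
  {a : S} {D D' : Matrix ι ι S}

lemma symm (h : IsMatrixFactorization a D D') : IsMatrixFactorization a D' D :=
  ⟨h.mul_eq', h.mul_eq⟩

lemma transpose (h : IsMatrixFactorization a D D') :
    IsMatrixFactorization a D.transpose D'.transpose :=
  ⟨by rw [← Matrix.transpose_mul, h.mul_eq']; simp, by rw [← Matrix.transpose_mul, h.mul_eq]; simp⟩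

lemma exact_map (h : IsMatrixFactorization a D D') (ha : a ∈ nonZeroDivisors S)
    (hsurj : Function.Surjective (algebraMap S R))
    (hker : RingHom.ker (algebraMap S R) = Ideal.span {a}) :
    Function.Exact (D'.map (algebraMap S R)).mulVecLin (D.map (algebraMap S R)).mulVecLin := by
  have map_eq_zero (s : S) : algebraMap S R s = 0 ↔ a ∣ s := by
    rw [← RingHom.mem_ker, hker, Ideal.mem_span_singleton]
  have mulVec_map (D : Matrix ι ι S) (y : ι → S) :
      (D.map (algebraMap S R)).mulVec (algebraMap S R ∘ y) = algebraMap S R ∘ D.mulVec y :=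
    funext fun i => (RingHom.map_mulVec _ D y i).symm
  intro z
  obtain ⟨y, rfl⟩ := hsurj.comp_left z
  constructor
  · intro hz
    rw [Matrix.mulVecLin_apply, mulVec_map] at hz
    choose w hw using fun i => (map_eq_zero _).1 (congrFun hz i)
    refine ⟨algebraMap S R ∘ w, ?_⟩
    have hay : a • y = a • D'.mulVec w := by
      rw [← Matrix.mulVec_smul, ← show D.mulVec y = a • w from funext hw, Matrix.mulVec_mulVec,
        h.mul_eq', Matrix.smul_mulVec, Matrix.one_mulVec]
    rw [Matrix.mulVecLin_apply, mulVec_map, show D'.mulVec w = y from funext fun i =>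
      ((mul_cancel_left_mem_nonZeroDivisors ha).1 (congrFun hay i)).symm]
  · rintro ⟨w, hw⟩
    obtain ⟨w, rfl⟩ := hsurj.comp_left w
    rw [← hw, Matrix.mulVecLin_apply, Matrix.mulVecLin_apply, mulVec_map, mulVec_map,
      Matrix.mulVec_mulVec, h.mul_eq, Matrix.smul_mulVec, Matrix.one_mulVec]
    exact funext fun i => (map_eq_zero _).2 (dvd_mul_right _ _)

theorem isTotallyExactPair_map (h : IsMatrixFactorization a D D') (ha : a ∈ nonZeroDivisors S)
    (hsurj : Function.Surjective (algebraMap S R))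
    (hker : RingHom.ker (algebraMap S R) = Ideal.span {a}) :
    IsTotallyExactPair (D.map (algebraMap S R)) (D'.map (algebraMap S R)) where
  exact_left := h.exact_map ha hsurj hker
  exact_right := h.symm.exact_map ha hsurj hker
  exact_transpose_left := h.transpose.exact_map ha hsurj hker
  exact_transpose_right := h.symm.transpose.exact_map ha hsurj hker

end IsMatrixFactorization

end TotallyExact

section WordMatrix

lemma exists_pow_succ_eq_pow_smul {S ι : Type*} [CommRing S] [Fintype ι] [DecidableEq ι]
    {n : Ideal S} {x : S} (hsq : n ^ 2 ≤ Ideal.span {x} * n) {A : Matrix ι ι S}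
    (hA : ∀ a b, A a b ∈ n) (i : ℕ) :
    ∃ B : Matrix ι ι S, (∀ a b, B a b ∈ n) ∧ A ^ (i + 1) = x ^ i • B := by
  induction i with
  | zero => exact ⟨A, hA, by simp⟩
  | succ i ih =>
    obtain ⟨B, hB, hBA⟩ := ih
    have exists_eq (a b : ι) : ∃ t ∈ n, x * t = (B * A) a b :=
      Ideal.mem_span_singleton_mul.1 <| hsq <| by
        rw [Matrix.mul_apply, pow_two]
        exact Ideal.sum_mem _ fun c _ => Ideal.mul_mem_mul (hB a c) (hA c b)
    choose C hC hCBA using exists_eq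
    refine ⟨Matrix.of C, hC, ?_⟩
    rw [pow_succ A, hBA, Matrix.smul_mul, pow_succ x, mul_smul]
    congr 1
    exact Matrix.ext fun a b => (hCBA a b).symm

/-- Since `A ^ (i + 1)` is divisible by `x ^ i`, the sum `∑ x ^ (N - i) * A ^ i` appearing in the
factorization of `x ^ (N + 1) - A ^ (N + 1)` is divisible by `x ^ (N - 1)`. -/
theorem exists_isMatrixFactorization_smul_one_sub {S ι : Type*} [CommRing S] [Fintype ι]
    [DecidableEq ι] {n : Ideal S} {x : S} (hx : x ∈ nonZeroDivisors S)
    (hsq : n ^ 2 ≤ Ideal.span {x} * n) {A : Matrix ι ι S} (hA : ∀ a b, A a b ∈ n)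
    (hnil : IsNilpotent A) : ∃ D', IsMatrixFactorization (x ^ 2) (x • 1 - A) D' := by
  obtain ⟨N, hN⟩ := hnil
  have exists_eq (i : ℕ) (hi : i ∈ Finset.range (N + 2)) :
      ∃ B : Matrix ι ι S, (x • 1) ^ i * A ^ (N + 2 - 1 - i) = x ^ N • B := by
    rw [smul_pow, one_pow, Matrix.smul_mul, one_mul]
    obtain rfl | hiN := (Finset.mem_range_succ_iff.1 hi).eq_or_lt
    · exact ⟨x • 1, by rw [smul_smul, ← pow_succ]; simp⟩
    · obtain ⟨B, -, hB⟩ := exists_pow_succ_eq_pow_smul hsq hA (N - i)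
      refine ⟨B, ?_⟩
      rw [show N + 2 - 1 - i = N - i + 1 by lia, hB, smul_smul, ← pow_add,
        Nat.add_sub_cancel' (by lia)]
  choose B hB using exists_eq
  have sum_eq : ∑ i ∈ Finset.range (N + 2), (x • (1 : Matrix ι ι S)) ^ i * A ^ (N + 2 - 1 - i) =
      x ^ N • ∑ i ∈ (Finset.range (N + 2)).attach, B i i.2 := by
    rw [← Finset.sum_attach, Finset.smul_sum]
    exact Finset.sum_congr rfl fun i _ => hB i i.2
  have pow_sub_pow : (x • (1 : Matrix ι ι S)) ^ (N + 2) - A ^ (N + 2) = x ^ N • x ^ 2 • 1 := by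
    rw [pow_add A, hN, zero_mul, sub_zero, smul_pow, one_pow, pow_add, mul_smul]
  have smul_injective : Function.Injective fun M : Matrix ι ι S => x ^ N • M := fun M M' h =>
    Matrix.ext fun a b => (mul_cancel_left_mem_nonZeroDivisors (pow_mem hx N)).1
      (congrFun (congrFun h a) b)
  have commute : Commute (x • 1) A := (Commute.one_left A).smul_left x
  refine ⟨∑ i ∈ (Finset.range (N + 2)).attach, B i i.2, smul_injective ?_, smul_injective ?_⟩ <;>
    dsimp only
  · rw [← Matrix.mul_smul, ← sum_eq, commute.mul_geom_sum₂, pow_sub_pow]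
  · rw [← Matrix.smul_mul, ← sum_eq, commute.geom_sum₂_mul, pow_sub_pow]

lemma isNilpotent_of_strictMono_level {S ι : Type*} [CommRing S] [Fintype ι] [DecidableEq ι]
    {A : Matrix ι ι S} (level : ι → ℕ) (hA : ∀ a b, A a b ≠ 0 → level a < level b) :
    IsNilpotent A := by
  have add_le (i : ℕ) : ∀ a b, (A ^ i) a b ≠ 0 → level a + i ≤ level b := by
    induction i with
    | zero =>
      intro a b hab
      rw [pow_zero, Matrix.one_apply, ne_eq, ite_eq_right_iff] at hab
      push Not at hab
      rw [hab.1, add_zero]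
    | succ i ih =>
      intro a b hab
      rw [pow_succ, Matrix.mul_apply] at hab
      obtain ⟨c, -, hc⟩ := Finset.exists_ne_zero_of_sum_ne_zero hab
      have := ih a c (left_ne_zero_of_mul hc)
      have := hA c b (right_ne_zero_of_mul hc)
      lia
  refine ⟨Finset.univ.sup level + 1, Matrix.ext fun a b => by_contra fun hab => ?_⟩
  have := add_le _ a b hab
  have := Finset.le_sup (f := level) (Finset.mem_univ b)
  lia

variable {S α : Type*} [CommRing S] [DecidableEq α]

/-- The matrix of the nilpotent operator sending the basis vector of the word `i :: l` to `v i`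
times the basis vector of `l`, and that of the empty word to `0`, on the free module on the words
of length at most `N`. -/
def wordMatrix (N : ℕ) (v : α → S) :
    Matrix {l : List α // l.length ≤ N} {l : List α // l.length ≤ N} S :=
  Matrix.of fun a b => match b.1 with
    | [] => 0
    | i :: l => if a.1 = l then v i else 0

lemma wordMatrix_nil (N : ℕ) (v : α → S) (a : {l : List α // l.length ≤ N}) :
    wordMatrix N v a ⟨[], N.zero_le⟩ = 0 := rfl

lemma wordMatrix_cons {N : ℕ} (v : α → S) (a : {l : List α // l.length ≤ N}) {i : α} {l : List α}
    (hl : (i :: l).length ≤ N) :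
    wordMatrix N v a ⟨i :: l, hl⟩ = if a.1 = l then v i else 0 := rfl

lemma wordMatrix_mem {n : Ideal S} {N : ℕ} {v : α → S} (hv : ∀ i, v i ∈ n)
    (a b : {l : List α // l.length ≤ N}) : wordMatrix N v a b ∈ n := by
  obtain ⟨_ | ⟨i, l⟩, hb⟩ := b
  · exact n.zero_mem
  · rw [wordMatrix_cons]
    split_ifs
    exacts [hv i, n.zero_mem]

lemma length_lt_of_wordMatrix_ne_zero {N : ℕ} {v : α → S} (a b : {l : List α // l.length ≤ N})
    (h : wordMatrix N v a b ≠ 0) : a.1.length < b.1.length := by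
  obtain ⟨_ | ⟨i, l⟩, hb⟩ := b
  · exact absurd (wordMatrix_nil N v a) h
  · rw [wordMatrix_cons] at h
    rw [(ite_ne_right_iff.1 h).1]
    exact l.length.lt_succ_self

end WordMatrix

section TestModule

lemma exists_quotient_range_apply_single_eq {R ι K : Type*} [CommRing R] [Fintype ι]
    [DecidableEq ι] [AddCommGroup K] [Module R K] {A : Matrix ι ι R} {κ : K} {a : ι}
    (hκ : ∀ b, A a b • κ = 0) : ∃ g : ((ι → R) ⧸ LinearMap.range A.mulVecLin) →ₗ[R] K,
      g (Submodule.mkQ _ (Pi.single a 1)) = κ := by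
  let g := LinearMap.toSpanSingleton R K κ ∘ₗ LinearMap.proj (φ := fun _ : ι => R) a
  refine ⟨Submodule.liftQ _ g ?_, (Submodule.liftQ_apply ..).trans (by simp [g])⟩
  rintro _ ⟨z, rfl⟩
  simp only [g, LinearMap.mem_ker, LinearMap.comp_apply, LinearMap.proj_apply,
    LinearMap.toSpanSingleton_apply, Matrix.mulVecLin_apply, Matrix.mulVec, dotProduct,
    Finset.sum_smul]
  exact Finset.sum_eq_zero fun b _ => by rw [mul_comm, mul_smul, hκ, smul_zero]

theorem exists_gDimZero_word_chain {S R α : Type} [CommRing S] [CommRing R] [Algebra S R]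
    [Finite α] {n : Ideal S} {x : S} (hx : x ∈ nonZeroDivisors S) (hxn : x ∈ n)
    (hsq : n ^ 2 ≤ Ideal.span {x} * n) (hsurj : Function.Surjective (algebraMap S R))
    (hker : RingHom.ker (algebraMap S R) = Ideal.span {x ^ 2}) {v : α → S} (hv : ∀ i, v i ∈ n)
    (N : ℕ) :
    ∃ (T : ModuleCat.{0} R) (e : List α → T), Module.Finite R T ∧ GDimZero R T ∧
      algebraMap S R x • e [] = 0 ∧
      (∀ i l, (i :: l).length ≤ N → algebraMap S R x • e (i :: l) = algebraMap S R (v i) • e l) ∧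
      ∀ (K : Type) [AddCommGroup K] [Module R K] (κ : K),
        (∀ s ∈ n, algebraMap S R s • κ = 0) → ∃ g : T →ₗ[R] K, g (e []) = κ := by
  classical
  have : Fintype {l : List α // l.length ≤ N} := (List.finite_length_le α N).fintype
  obtain ⟨D', hD'⟩ := exists_isMatrixFactorization_smul_one_sub hx hsq (wordMatrix_mem hv)
    (isNilpotent_of_strictMono_level _ (length_lt_of_wordMatrix_ne_zero (N := N) (v := v)))
  set D := x • 1 - wordMatrix N v with hD
  let E (l : {l : List α // l.length ≤ N}) : {l : List α // l.length ≤ N} → R := Pi.single l 1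
  let q := (LinearMap.range (D.map (algebraMap S R)).mulVecLin).mkQ
  have mkQ_col (b : {l : List α // l.length ≤ N}) : q (fun a => algebraMap S R (D a b)) = 0 :=
    (Submodule.Quotient.mk_eq_zero _).2 ⟨E b, funext fun a => by simp [E]⟩
  let e (l : List α) := if hl : l.length ≤ N then q (E ⟨l, hl⟩) else 0
  have e_of_le {l : List α} (hl : l.length ≤ N) : e l = q (E ⟨l, hl⟩) := dif_pos hl
  refine ⟨ModuleCat.of R _, e, inferInstanceAs (Module.Finite R (_ ⧸ _)),
    (hD'.isTotallyExactPair_map (pow_mem hx 2) hsurj hker).gDimZero_quotient_range,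
    ?_, fun i l hil => ?_, fun K _ _ κ hκ => ?_⟩
  · rw [e_of_le (l := []) N.zero_le, ← map_smul, ← mkQ_col ⟨[], N.zero_le⟩]
    congr 1
    ext a
    simp [hD, wordMatrix_nil, E, Matrix.one_apply, Pi.single_apply, apply_ite (algebraMap S R)]
  · rw [e_of_le hil, e_of_le (l.length.le_succ.trans hil), ← map_smul, ← map_smul,
      ← sub_eq_zero, ← map_sub, ← mkQ_col ⟨i :: l, hil⟩]
    congr 1
    ext a
    simp [hD, wordMatrix_cons, E, Pi.single_apply, Subtype.ext_iff, apply_ite (algebraMap S R),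
      Matrix.algebraMap_matrix_apply, ← Algebra.algebraMap_eq_smul_one]
  · obtain ⟨g, hg⟩ := exists_quotient_range_apply_single_eq (κ := κ)
      (A := D.map (algebraMap S R)) (a := ⟨[], N.zero_le⟩)
      fun b => hκ (D _ b) (n.sub_mem (n.mul_mem_right _ hxn) (wordMatrix_mem hv _ _))
    exact ⟨g, by rwa [e_of_le (l := []) N.zero_le]⟩

end TestModule

section Stabilization

variable {R X α : Type*} [CommRing R] [AddCommGroup X] [Module R X] [IsArtinian R X]

-- The elements `e l` with `l` of length at most `N - j` survive `j` iterations of the operator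
-- `W ↦ {z | ∀ i, v i • z ∈ y • W}` on submodules, which becomes stationary when started at `⊤`.
theorem exists_submodule_smul_mem_map_smul {v : α → R} {y : R} {P : X → Prop}
    (H : ∀ N : ℕ, ∃ e : List α → X, P (e []) ∧
      ∀ i l, (i :: l).length ≤ N → y • e (i :: l) = v i • e l) :
    ∃ U : Submodule R X, (∃ u ∈ U, P u) ∧
      ∀ i, ∀ z ∈ U, v i • z ∈ U.map (LinearMap.lsmul R X y) := by
  let Φ (W : Submodule R X) : Submodule R X :=
    ⨅ i, (W.map (LinearMap.lsmul R X y)).comap (LinearMap.lsmul R X (v i))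
  have mem_Φ {W : Submodule R X} {z : X} :
      z ∈ Φ W ↔ ∀ i, v i • z ∈ W.map (LinearMap.lsmul R X y) := by simp [Φ]
  have mono : Monotone Φ := fun W W' h =>
    iInf_mono fun i => Submodule.comap_mono (Submodule.map_mono h)
  obtain ⟨N, hN⟩ := IsArtinian.monotone_stabilizes (R := R) (M := X)
    ⟨fun j => OrderDual.toDual (Φ^[j] ⊤), (mono.antitone_iterate_of_map_le le_top).dual_right⟩
  obtain ⟨e, hP, he⟩ := H N
  have mem_iterate (j : ℕ) : ∀ l : List α, l.length + j ≤ N → e l ∈ Φ^[j] ⊤ := by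
    induction j with
    | zero => exact fun _ _ => Submodule.mem_top
    | succ j ih =>
      intro l hl
      rw [Function.iterate_succ_apply', mem_Φ]
      exact fun i => ⟨e (i :: l), ih _ (by rw [List.length_cons]; lia),
        he i l (by rw [List.length_cons]; lia)⟩
  refine ⟨Φ^[N] ⊤, ⟨e [], mem_iterate N [] (by simp), hP⟩, fun i z hz => ?_⟩
  have stable : Φ^[N] ⊤ = Φ (Φ^[N] ⊤) :=
    (hN (N + 1) N.le_succ).trans (Function.iterate_succ_apply' Φ N ⊤)
  rw [stable] at hz
  exact mem_Φ.1 hz i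

end Stabilization

section ExactConcaGenerator

open IsLocalRing

/-- An exact Conca generator of a local ring `R` with maximal ideal `𝔪`: an element `x` of `𝔪` with
`x² = 0` and `𝔪² ⊆ x𝔪` (a Conca generator) which is an exact zero divisor, `(0 : x) = (x)`.
The last field adds that `𝔪` is not generated by `x` and one further element. -/
structure IsExactConcaGenerator {R : Type*} [CommRing R] [IsLocalRing R] (x : R) : Prop where
  mem : x ∈ maximalIdeal R
  sq_le : maximalIdeal R ^ 2 ≤ Ideal.span {x} * maximalIdeal R
  mul_self : x * x = 0
  mem_span_of_mul_eq_zero : ∀ {r : R}, x * r = 0 → r ∈ Ideal.span {x}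
  exists_pair : ∃ y₁ ∈ maximalIdeal R, ∃ y₂ ∈ maximalIdeal R,
    ∀ r s : R, r * y₁ + s * y₂ ∈ Ideal.span {x} → r ∈ maximalIdeal R ∧ s ∈ maximalIdeal R

namespace IsNonGorensteinMinMult

variable {S R : Type*} [CommRing S] [CommRing R] [Algebra S R] {n : Ideal S} {x : S}

lemma isMaximal_map (h : IsNonGorensteinMinMult n x)
    (hsurj : Function.Surjective (algebraMap S R))
    (hker : RingHom.ker (algebraMap S R) = Ideal.span {x ^ 2}) :
    (n.map (algebraMap S R)).IsMaximal :=
  have := h.isMaximal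
  .map_of_surjective_of_ker_le hsurj
    (hker.trans_le ((Ideal.span_singleton_le_iff_mem _).2 (pow_two x ▸ n.mul_mem_left x h.mem)))

lemma map_pow_three (h : IsNonGorensteinMinMult n x)
    (hker : RingHom.ker (algebraMap S R) = Ideal.span {x ^ 2}) :
    n.map (algebraMap S R) ^ 3 = ⊥ := by
  have cube_eq : n ^ 3 = Ideal.span {x ^ 2} * n := by
    rw [pow_succ, ← h.span_mul_eq_sq, mul_assoc, ← pow_two, ← h.span_mul_eq_sq, ← mul_assoc,
      Ideal.span_singleton_mul_span_singleton, pow_two]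
  rw [← Ideal.map_pow, Ideal.map_eq_bot_iff_le_ker, cube_eq, hker]
  exact Ideal.mul_le_left

lemma map_le_of_isPrime (h : IsNonGorensteinMinMult n x)
    (hker : RingHom.ker (algebraMap S R) = Ideal.span {x ^ 2}) (P : Ideal R) [P.IsPrime] :
    n.map (algebraMap S R) ≤ P :=
  Ideal.IsPrime.le_of_pow_le (n := 3) ((h.map_pow_three hker).le.trans bot_le)

lemma isLocalRing (h : IsNonGorensteinMinMult n x) (hsurj : Function.Surjective (algebraMap S R))
    (hker : RingHom.ker (algebraMap S R) = Ideal.span {x ^ 2}) : IsLocalRing R :=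
  have hmax := h.isMaximal_map hsurj hker
  .of_unique_max_ideal ⟨n.map (algebraMap S R), hmax, fun P hP =>
    (hmax.eq_of_le hP.ne_top (h.map_le_of_isPrime hker P)).symm⟩

lemma isNoetherianRing (h : IsNonGorensteinMinMult n x)
    (hsurj : Function.Surjective (algebraMap S R))
    (hker : RingHom.ker (algebraMap S R) = Ideal.span {x ^ 2}) : IsNoetherianRing R :=
  .of_prime fun P hP => (h.isMaximal_map hsurj hker).eq_of_le hP.ne_top
    (h.map_le_of_isPrime hker P) ▸ h.fg.map _

variable [IsLocalRing R]

lemma map_eq_maximalIdeal (h : IsNonGorensteinMinMult n x)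
    (hsurj : Function.Surjective (algebraMap S R))
    (hker : RingHom.ker (algebraMap S R) = Ideal.span {x ^ 2}) :
    n.map (algebraMap S R) = maximalIdeal R :=
  eq_maximalIdeal (h.isMaximal_map hsurj hker)

lemma isArtinianRing (h : IsNonGorensteinMinMult n x)
    (hsurj : Function.Surjective (algebraMap S R))
    (hker : RingHom.ker (algebraMap S R) = Ideal.span {x ^ 2}) : IsArtinianRing R :=
  have := h.isNoetherianRing hsurj hker
  (isArtinianRing_iff_isNilpotent_maximalIdeal R).2
    ⟨3, h.map_eq_maximalIdeal hsurj hker ▸ h.map_pow_three hker⟩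

lemma isExactConcaGenerator (h : IsNonGorensteinMinMult n x)
    (hsurj : Function.Surjective (algebraMap S R))
    (hker : RingHom.ker (algebraMap S R) = Ideal.span {x ^ 2}) :
    IsExactConcaGenerator (algebraMap S R x) where
  mem := h.map_eq_maximalIdeal hsurj hker ▸ Ideal.mem_map_of_mem _ h.mem
  sq_le := by
    rw [← h.map_eq_maximalIdeal hsurj hker, ← Ideal.map_pow, ← h.span_mul_eq_sq, Ideal.map_mul,
      Ideal.map_span, Set.image_singleton]
  mul_self := by
    rw [← map_mul, ← pow_two, ← RingHom.mem_ker, hker]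
    exact Ideal.mem_span_singleton_self _
  mem_span_of_mul_eq_zero {r} hr := by
    obtain ⟨s, rfl⟩ := hsurj r
    rw [← map_mul, ← RingHom.mem_ker, hker, Ideal.mem_span_singleton, pow_two,
      dvd_cancel_left_mem_nonZeroDivisors h.mem_nonZeroDivisors] at hr
    exact Ideal.mem_span_singleton.2 (map_dvd _ hr)
  exists_pair := by
    obtain ⟨y₁, hy₁, y₂, hy₂, hpair⟩ := h.exists_pair
    simp only [← h.map_eq_maximalIdeal hsurj hker]
    refine ⟨_, Ideal.mem_map_of_mem _ hy₁, _, Ideal.mem_map_of_mem _ hy₂, fun r s hrs => ?_⟩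
    obtain ⟨r, rfl⟩ := hsurj r
    obtain ⟨s, rfl⟩ := hsurj s
    rw [← map_mul, ← map_mul, ← map_add, ← Set.image_singleton, ← Ideal.map_span,
      ← Ideal.mem_comap, Ideal.comap_map_of_surjective' _ hsurj, hker, sup_of_le_left] at hrs
    · exact (hpair r s hrs).imp (Ideal.mem_map_of_mem _) (Ideal.mem_map_of_mem _)
    · exact Ideal.span_singleton_le_span_singleton.2 (dvd_pow_self x two_ne_zero)

end IsNonGorensteinMinMult

variable {R M : Type*} [CommRing R] [IsLocalRing R] [AddCommGroup M] [Module R M]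

lemma exists_dual_apply_eq_mul {c : R} (hc : ∀ r ∈ maximalIdeal R, r * c = 0) {z : M}
    (hz : z ∉ maximalIdeal R • (⊤ : Submodule R M)) :
    ∃ f : Module.Dual R M, (∀ w, ∃ r, f w = r * c) ∧ ∃ r ∉ maximalIdeal R, f z = r * c := by
  let _ := Ideal.Quotient.field (maximalIdeal R)
  obtain ⟨g, hg⟩ : ∃ g : Module.Dual (R ⧸ maximalIdeal R)
      (M ⧸ maximalIdeal R • (⊤ : Submodule R M)), g (Submodule.Quotient.mk z) ≠ 0 := by
    by_contra! h
    exact hz ((Submodule.Quotient.mk_eq_zero _).1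
      ((Module.forall_dual_apply_eq_zero_iff (R ⧸ maximalIdeal R) _).1 h))
  let q : R ⧸ maximalIdeal R →ₗ[R] R :=
    Submodule.liftQ _ (LinearMap.toSpanSingleton R R c) fun r hr => hc r hr
  let f : M →ₗ[R] R := q ∘ₗ g.restrictScalars R ∘ₗ Submodule.mkQ _
  have f_apply {w : M} {r : R} (hr : Ideal.Quotient.mk _ r = g (Submodule.Quotient.mk w)) :
      f w = r * c := by
    change q (g (Submodule.Quotient.mk w)) = r * c
    rw [← hr]
    rfl
  refine ⟨f, fun w => ?_, ?_⟩
  · obtain ⟨r, hr⟩ := Ideal.Quotient.mk_surjective (g (Submodule.Quotient.mk w))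
    exact ⟨r, f_apply hr⟩
  · obtain ⟨r, hr⟩ := Ideal.Quotient.mk_surjective (g (Submodule.Quotient.mk z))
    exact ⟨r, fun h => hg (hr ▸ Ideal.Quotient.eq_zero_iff_mem.2 h), f_apply hr⟩

namespace IsExactConcaGenerator

variable {x : R}

lemma span_mul_sq_eq_bot (hx : IsExactConcaGenerator x) :
    Ideal.span {x} * maximalIdeal R ^ 2 = ⊥ := by
  refine eq_bot_iff.2 ((Ideal.mul_mono_right hx.sq_le).trans ?_)
  rw [← mul_assoc, Ideal.span_singleton_mul_span_singleton, hx.mul_self]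
  simp

lemma mul_mul_eq_zero (hx : IsExactConcaGenerator x) {r s : R} (hr : r ∈ maximalIdeal R)
    (hs : s ∈ maximalIdeal R) : x * (r * s) = 0 :=
  (Submodule.mem_bot R).1 (hx.span_mul_sq_eq_bot.le (Ideal.mul_mem_mul
    (Ideal.mem_span_singleton_self x) (pow_two (maximalIdeal R) ▸ Ideal.mul_mem_mul hr hs)))

-- A functional on `P` with image in `R(xy₁)`, extended to `M`, has values in `𝔪` because it maps
-- `xy₂M` into `R(xy₁)`; so it vanishes on `x𝔪M`.
theorem span_smul_le_smul_of_surjective_dualMap (hx : IsExactConcaGenerator x)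
    {P : Submodule R M} (hP : Ideal.span {x} • maximalIdeal R • ⊤ ≤ P)
    (hdual : Function.Surjective P.subtype.dualMap) :
    Ideal.span {x} • maximalIdeal R • ⊤ ≤ maximalIdeal R • P := by
  obtain ⟨y₁, hy₁, y₂, hy₂, hpair⟩ := hx.exists_pair
  intro z hz
  by_contra hzP
  have hz_top : (⟨z, hP hz⟩ : P) ∉ maximalIdeal R • (⊤ : Submodule R P) := fun h =>
    hzP (by simpa using Submodule.mem_map_of_mem (f := P.subtype) h)
  obtain ⟨f, hf, r, hr, hfz⟩ := exists_dual_apply_eq_mul (c := x * y₁)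
    (fun r hr => by rw [mul_left_comm, hx.mul_mul_eq_zero hr hy₁]) hz_top
  obtain ⟨φ, rfl⟩ := hdual f
  have φ_mem (w : M) : φ w ∈ maximalIdeal R := by
    have hw : x • y₂ • w ∈ Ideal.span {x} • maximalIdeal R • (⊤ : Submodule R M) :=
      Submodule.smul_mem_smul (Ideal.mem_span_singleton_self x)
        (Submodule.smul_mem_smul hy₂ Submodule.mem_top)
    obtain ⟨s, hs⟩ := hf ⟨_, hP hw⟩
    have hs : x * (y₂ * φ w) = s * (x * y₁) := by simpa using hs
    refine (hpair (-s) (φ w) (hx.mem_span_of_mul_eq_zero ?_)).2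
    linear_combination hs
  have φ_z : φ z = 0 := by
    have map_le : (Ideal.span {x} • maximalIdeal R • (⊤ : Submodule R M)).map φ ≤ ⊥ := by
      rw [Submodule.map_smul'', Submodule.map_smul'', ← hx.span_mul_sq_eq_bot, pow_two]
      exact Submodule.smul_mono le_rfl (Submodule.smul_mono le_rfl
        (Submodule.map_le_iff_le_comap.2 fun w _ => φ_mem w))
    exact map_le (Submodule.mem_map_of_mem hz)
  have φ_z' : φ z = r * (x * y₁) := hfz
  exact hr (hpair r 0 (hx.mem_span_of_mul_eq_zero (by linear_combination φ_z - φ_z'))).1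

end IsExactConcaGenerator

end ExactConcaGenerator

section Colon

lemma mem_span_singleton_smul_iff {R M : Type*} [CommRing R] [AddCommGroup M] [Module R M] {r : R}
    {N : Submodule R M} {z : M} : z ∈ Ideal.span {r} • N ↔ ∃ w ∈ N, r • w = z := by
  rw [Submodule.ideal_span_singleton_smul, Submodule.mem_smul_pointwise_iff_exists]

lemma exists_colon_submodule {S F : Type*} [CommRing S] [AddCommGroup F] [Module S F]
    {n : Ideal S} {x : S} (hx : IsSMulRegular F x) (hxn : x ∈ n) (hsq : n ^ 2 ≤ Ideal.span {x} * n)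
    {L : Submodule S F} (hL : n • L ≤ Ideal.span {x} • L ⊔ Ideal.span {x ^ 2} • ⊤) :
    ∃ C : Submodule S F, n • C ≤ L ⊔ Ideal.span {x} • C ∧ ∀ f, x • f ∈ L → f ∈ C := by
  let C := (n • L).comap (LinearMap.lsmul S F (x ^ 2))
  have mem_C {f : F} : f ∈ C ↔ x ^ 2 • f ∈ n • L := .rfl
  have exists_eq_add {f : F} (hf : f ∈ n • L) : ∃ l ∈ L, ∃ c ∈ C, x • (l + x • c) = f := by
    obtain ⟨_, hl, _, hc, rfl⟩ := Submodule.mem_sup.1 (hL hf)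
    obtain ⟨l, hlL, rfl⟩ := mem_span_singleton_smul_iff.1 hl
    obtain ⟨c, -, rfl⟩ := mem_span_singleton_smul_iff.1 hc
    have smul_mem : x • l ∈ n • L := Submodule.smul_mem_smul hxn hlL
    exact ⟨l, hlL, c, (Submodule.add_mem_iff_right _ smul_mem).1 hf, by
      rw [smul_add, smul_smul, pow_two]⟩
  refine ⟨C, Submodule.smul_le.2 fun v hv c hc => ?_, fun f hf => ?_⟩
  · have smul_mem : v • x ^ 2 • c ∈ (Ideal.span {x} * n) • L :=
      Submodule.smul_mono_left hsq (by
        rw [pow_two n, Submodule.mul_smul]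
        exact Submodule.smul_mem_smul hv hc)
    rw [Submodule.mul_smul] at smul_mem
    obtain ⟨z, hz, hzc⟩ := mem_span_singleton_smul_iff.1 smul_mem
    obtain ⟨l, hl, c', hc', rfl⟩ := exists_eq_add hz
    have eq_add : v • c = l + x • c' := (hx.pow 2) (by
      simpa only [pow_two, mul_smul, smul_comm v] using hzc.symm)
    exact eq_add ▸ Submodule.add_mem_sup hl (mem_span_singleton_smul_iff.2 ⟨c', hc', rfl⟩)
  · rw [mem_C, pow_two, mul_smul]
    exact Submodule.smul_mem_smul hxn hf

lemma exists_colon_submodule_quotient {S R ι : Type*} [CommRing S] [CommRing R] [Algebra S R]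
    {n : Ideal S} {x : S} (hx : x ∈ nonZeroDivisors S) (hxn : x ∈ n)
    (hsq : n ^ 2 ≤ Ideal.span {x} * n) (hsurj : Function.Surjective (algebraMap S R))
    (hker : RingHom.ker (algebraMap S R) = Ideal.span {x ^ 2}) {U : Submodule R (ι → R)}
    (hU : n.map (algebraMap S R) • U ≤ Ideal.span {algebraMap S R x} • U) :
    ∃ W : Submodule R (ι → R), n.map (algebraMap S R) • W ≤ U ⊔ Ideal.span {algebraMap S R x} • W ∧
      ∀ a, algebraMap S R x • a ∈ U → a ∈ W := by
  have : RingHomSurjective (algebraMap S R) := ⟨hsurj⟩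
  let ρ : (ι → S) →ₛₗ[algebraMap S R] ι → R :=
    { toFun f i := algebraMap S R (f i)
      map_add' _ _ := funext fun _ => map_add _ _ _
      map_smul' _ _ := funext fun _ => map_mul _ _ _ }
  have ρ_surjective : Function.Surjective ρ := hsurj.comp_left
  have mem_ker {f : ι → S} (hf : ρ f = 0) : f ∈ Ideal.span {x ^ 2} • (⊤ : Submodule S (ι → S)) := by
    have hdvd (i : ι) : x ^ 2 ∣ f i := Ideal.mem_span_singleton.1 (hker.le (congrFun hf i))
    choose g hg using hdvd
    exact (funext hg : f = x ^ 2 • g) ▸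
      Submodule.smul_mem_smul (Ideal.mem_span_singleton_self _) Submodule.mem_top
  obtain ⟨C, hC, mem_C⟩ := exists_colon_submodule (F := ι → S) (x := x) (L := U.comap ρ)
    (fun f g h => funext fun i => (mul_cancel_left_mem_nonZeroDivisors hx).1 (congrFun h i))
    hxn hsq (Submodule.smul_le.2 fun s hs l hl => by
      obtain ⟨u, hu, hul⟩ := mem_span_singleton_smul_iff.1
        (hU (Submodule.smul_mem_smul (Ideal.mem_map_of_mem _ hs) hl))
      obtain ⟨l', rfl⟩ := ρ_surjective u
      rw [← add_sub_cancel (x • l') (s • l)]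
      exact Submodule.add_mem_sup
        (Submodule.smul_mem_smul (Ideal.mem_span_singleton_self x) hu)
        (mem_ker (by rw [map_sub, map_smulₛₗ, map_smulₛₗ, hul, sub_self])))
  refine ⟨C.map ρ, Submodule.smul_le.2 fun r hr w hw => ?_, fun a ha => ?_⟩
  · obtain ⟨s, hs, rfl⟩ := (Ideal.mem_map_iff_of_surjective _ hsurj).1 hr
    obtain ⟨c, hc, rfl⟩ := hw
    obtain ⟨l, hl, _, hz, h⟩ := Submodule.mem_sup.1 (hC (Submodule.smul_mem_smul hs hc))
    obtain ⟨z, hzC, rfl⟩ := mem_span_singleton_smul_iff.1 hz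
    rw [← map_smulₛₗ, ← h, map_add, map_smulₛₗ]
    exact Submodule.add_mem_sup hl
      (mem_span_singleton_smul_iff.2 ⟨ρ z, Submodule.mem_map_of_mem hzC, rfl⟩)
  · obtain ⟨f, rfl⟩ := ρ_surjective a
    exact ⟨f, mem_C f (by rwa [Submodule.mem_comap, map_smulₛₗ]), rfl⟩

end Colon

section MinimalCoresolution

open IsLocalRing

section MinimalResolution

variable {R M : Type*} [CommRing R] [IsLocalRing R] [AddCommGroup M] [Module R M]

lemma exists_surjective_ker_mem_maximalIdeal [Module.Finite R M] :
    ∃ (b : ℕ) (p : (Fin b → R) →ₗ[R] M),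
      Function.Surjective p ∧ ∀ v, p v = 0 → ∀ i, v i ∈ maximalIdeal R := by
  let _ := Ideal.Quotient.field (maximalIdeal R)
  have : Module.Finite (R ⧸ maximalIdeal R) (M ⧸ maximalIdeal R • (⊤ : Submodule R M)) :=
    .of_restrictScalars_finite R _ _
  let B := Module.finBasis (R ⧸ maximalIdeal R) (M ⧸ maximalIdeal R • (⊤ : Submodule R M))
  choose m hm using fun i => Submodule.Quotient.mk_surjective _ (B i)
  have mk_apply (v) : Submodule.Quotient.mk (Fintype.linearCombination R m v) =
      ∑ i, Ideal.Quotient.mk (maximalIdeal R) (v i) • B i := by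
    simp only [Fintype.linearCombination_apply, ← hm]
    exact map_sum (Submodule.mkQ _) _ _
  refine ⟨_, Fintype.linearCombination R m, ?_, fun v hv i => ?_⟩
  · refine LinearMap.surjective_of_surjective_comp_mkQ _ _ (maximalIdeal_le_jacobson ⊥) fun z => ?_
    choose v hv using fun i => Ideal.Quotient.mk_surjective (B.repr z i)
    refine ⟨v, (mk_apply v).trans ?_⟩
    simp only [hv, B.sum_repr]
  · rw [← Ideal.Quotient.eq_zero_iff_mem]
    exact Fintype.linearIndependent_iff.1 B.linearIndependent _ ((mk_apply v).symm.trans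
      (by rw [hv, Submodule.Quotient.mk_zero])) i

lemma exists_matrix_range_eq [IsNoetherianRing R] {m : Type*} [Finite m] (K : Submodule R (m → R)) :
    ∃ (b : ℕ) (A : Matrix m (Fin b) R), LinearMap.range A.mulVecLin = K ∧
      ∀ v, A.mulVecLin v = 0 → ∀ i, v i ∈ maximalIdeal R := by
  obtain ⟨b, p, hp, hker⟩ := exists_surjective_ker_mem_maximalIdeal (R := R) (M := K)
  have mulVecLin_eq : (LinearMap.toMatrix' (K.subtype ∘ₗ p)).mulVecLin = K.subtype ∘ₗ p :=
    Matrix.toLin'_toMatrix' _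
  refine ⟨b, LinearMap.toMatrix' (K.subtype ∘ₗ p), ?_, fun v hv => hker v ?_⟩
  · rw [mulVecLin_eq, LinearMap.range_comp_of_range_eq_top _ (LinearMap.range_eq_top.2 hp),
      Submodule.range_subtype]
  · rw [mulVecLin_eq] at hv
    exact Subtype.ext hv

lemma exists_minimal_free_resolution [IsNoetherianRing R] [Module.Finite R M] :
    ∃ (b : ℕ → ℕ) (p : (Fin (b 0) → R) →ₗ[R] M)
      (d : ∀ i, Matrix (Fin (b i)) (Fin (b (i + 1))) R),
      Function.Surjective p ∧ Function.Exact (d 0).mulVecLin p ∧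
      (∀ i, Function.Exact (d (i + 1)).mulVecLin (d i).mulVecLin) ∧
      ∀ i j l, d i j l ∈ maximalIdeal R := by
  choose c A hrange hker using fun b => exists_matrix_range_eq (R := R) (m := Fin b)
  obtain ⟨b₀, p, hp, hp_ker⟩ := exists_surjective_ker_mem_maximalIdeal (R := R) (M := M)
  let s : ℕ → Σ b, Submodule R (Fin b → R) := fun i =>
    i.rec ⟨b₀, LinearMap.ker p⟩ fun _ K => ⟨c K.1 K.2, LinearMap.ker (A K.1 K.2).mulVecLin⟩
  have mem_maximalIdeal (i : ℕ) : ∀ v ∈ (s i).2, ∀ j, v j ∈ maximalIdeal R :=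
    i.casesOn hp_ker fun i => hker (s i).1 (s i).2
  refine ⟨fun i => (s i).1, p, fun i => A (s i).1 (s i).2, hp,
    LinearMap.exact_iff.2 (hrange _ _).symm, fun i => LinearMap.exact_iff.2 (hrange _ _).symm,
    fun i j l => ?_⟩
  simpa using mem_maximalIdeal i _ ((hrange _ _).le ⟨Pi.single l 1, rfl⟩) j

end MinimalResolution

section Dual

variable {R : Type*} [CommRing R]

lemma surjective_dualMap_subtype_range {L M N : Type*} [AddCommGroup L] [Module R L]
    [AddCommGroup M] [Module R M] [AddCommGroup N] [Module R N] {f : L →ₗ[R] M} {g : M →ₗ[R] N}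
    (hgf : g ∘ₗ f = 0) (hdual : Function.Exact g.dualMap f.dualMap) :
    Function.Surjective (LinearMap.range g).subtype.dualMap := by
  intro φ
  obtain ⟨ψ, hψ⟩ := (hdual (φ ∘ₗ g.rangeRestrict)).1 (LinearMap.ext fun z => by
    have hz : g.rangeRestrict (f z) = 0 := Subtype.ext (LinearMap.congr_fun hgf z)
    simp [hz])
  exact ⟨ψ, LinearMap.ext fun ⟨_, z, hz⟩ => by subst hz; exact LinearMap.congr_fun hψ z⟩

variable {X m : Type*} [AddCommGroup X] [Module R X] [Fintype m]

lemma exists_injective_forall_dotProduct_eq (hrefl : Function.Bijective (Module.Dual.eval R X))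
    {p : (m → R) →ₗ[R] Module.Dual R X} (hp : Function.Surjective p) :
    ∃ ι : X →ₗ[R] (m → R), Function.Injective ι ∧ (∀ w z, w ⬝ᵥ ι z = p w z) ∧
      ∀ (l : Type*) [Fintype l] (A : Matrix m l R), Function.Exact A.mulVecLin p →
        Function.Exact ι A.transpose.mulVecLin := by
  classical
  let e := dotProductEquiv R m
  let ι : X →ₗ[R] (m → R) := e.symm.toLinearMap ∘ₗ p.lcomp R R ∘ₗ Module.Dual.eval R X
  have dotProduct_ι (w : m → R) (z : X) : w ⬝ᵥ ι z = p w z :=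
    (dotProduct_comm _ _).trans (LinearMap.congr_fun (e.apply_symm_apply _) w)
  refine ⟨ι, e.symm.injective.comp ((LinearMap.lcomp_injective_of_surjective _ hp).comp hrefl.1),
    dotProduct_ι, fun l _ A hA => ?_⟩
  refine (Function.Exact.iff_of_ladder_linearEquiv (e₁ := .ofBijective _ hrefl) (e₂ := e)
    (e₃ := dotProductEquiv R l) ?_ ?_).1 (LinearMap.exact_lcomp_of_exact_of_surjective R hA hp)
  · exact LinearMap.ext fun z => (e.apply_symm_apply _).symm
  · ext
    simp [e]

end Dual

theorem exists_minimal_coresolution {R X : Type} [CommRing R] [IsLocalRing R] [IsNoetherianRing R]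
    [AddCommGroup X] [Module R X] [Module.Finite R X]
    (hrefl : Function.Bijective (Module.Dual.eval R X))
    (hext : ∀ i, Subsingleton (ExtGrp R (Module.Dual R X) R (i + 1))) :
    ∃ (b : ℕ → ℕ) (ι : X →ₗ[R] (Fin (b 0) → R)) (D : ∀ i, Matrix (Fin (b (i + 1))) (Fin (b i)) R),
      Function.Injective ι ∧ Function.Exact ι (D 0).mulVecLin ∧
      (∀ i, Function.Exact (D i).mulVecLin (D (i + 1)).mulVecLin) ∧
      (∀ i j l, D i j l ∈ maximalIdeal R) ∧
      ∀ i, Function.Surjective (LinearMap.ker (D i).mulVecLin).subtype.dualMap := by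
  obtain ⟨b, p, d, hp, hd₀, hd, hmem⟩ :=
    exists_minimal_free_resolution (R := R) (M := Module.Dual R X)
  obtain ⟨ι, hι, dotProduct_ι, exact_ι⟩ := exists_injective_forall_dotProduct_eq hrefl hp
  have dualMap_ι : ι.dualMap ∘ₗ (dotProductEquiv R (Fin (b 0))).toLinearMap = p :=
    LinearMap.ext fun w => LinearMap.ext (dotProduct_ι w)
  have exact_D (i : ℕ) := exact_lcomp_mulVecLin_iff.1
    ((subsingleton_extGrp_succ_iff (X := fun i => Fin (b i) → R) hp hd₀ hd i).1 (hext i))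
  refine ⟨b, ι, fun i => (d i).transpose, hι, exact_ι _ _ hd₀, exact_D,
    fun i j l => hmem i l j, fun i => ?_⟩
  match i with
  | 0 =>
    rw [(exact_ι _ _ hd₀).linearMap_ker_eq]
    have dualMap_ι_surjective : Function.Surjective ι.dualMap :=
      .of_comp (congrArg DFunLike.coe dualMap_ι ▸ hp)
    exact surjective_dualMap_subtype_range (LinearMap.comp_zero (M := X) ι)
      fun φ => ⟨fun _ => dualMap_ι_surjective φ, fun _ => LinearMap.comp_zero φ⟩
  | 1 =>
    rw [(exact_D 0).linearMap_ker_eq]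
    refine surjective_dualMap_subtype_range (exact_ι _ _ hd₀).linearMap_comp_eq_zero ?_
    refine Function.Exact.of_ladder_linearEquiv_of_exact (e₁ := dotProductEquiv R (Fin (b 1)))
      (e₂ := dotProductEquiv R (Fin (b 0))) (e₃ := .refl R _) ?_ dualMap_ι hd₀
    ext
    simp
  | i + 2 =>
    rw [(exact_D (i + 1)).linearMap_ker_eq]
    exact surjective_dualMap_subtype_range (exact_D i).linearMap_comp_eq_zero
      (exact_lcomp_mulVecLin_iff.2 (hd i))

end MinimalCoresolution

section Descent

open IsLocalRing

variable {R : Type*} [CommRing R]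

lemma mem_smul_top_pi_iff {ι : Type*} [Finite ι] {I : Ideal R} {v : ι → R} :
    v ∈ I • (⊤ : Submodule R (ι → R)) ↔ ∀ i, v i ∈ I := by
  classical
  have := Fintype.ofFinite ι
  refine ⟨fun hv i => ?_, fun hv => ?_⟩
  · have smul_le : I • ⊤ ≤ Submodule.comap (LinearMap.proj i : (ι → R) →ₗ[R] R) I :=
      Submodule.smul_le.2 fun r hr w _ => I.mul_mem_right (w i) hr
    exact smul_le hv
  · rw [pi_eq_sum_univ v]
    exact sum_mem fun i _ => Submodule.smul_mem_smul (hv i) Submodule.mem_top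

lemma length_map_lt {M N : Type*} [AddCommGroup M] [Module R M] [AddCommGroup N] [Module R N]
    [IsArtinian R M] [IsNoetherian R M] {f : M →ₗ[R] N} {A : Submodule R M} {a : M} (ha : a ∈ A)
    (ha_ne : a ≠ 0) (hfa : f a = 0) : Module.length R (A.map f) < Module.length R A := by
  have : Nontrivial (LinearMap.ker (f.submoduleMap A)) :=
    ⟨⟨⟨⟨a, ha⟩, Subtype.ext hfa⟩, 0, fun h => ha_ne (congrArg (fun z => (z.1 : M)) h)⟩⟩
  have length_ne_top : Module.length R (A.map f) ≠ ⊤ :=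
    ne_top_of_le_ne_top Module.length_ne_top
      (Module.length_le_of_surjective (f.submoduleMap A) (f.submoduleMap_surjective A))
  rw [Module.length_eq_add_of_exact (LinearMap.ker (f.submoduleMap A)).subtype (f.submoduleMap A)
    (Submodule.subtype_injective _) (f.submoduleMap_surjective A)
    (LinearMap.exact_subtype_ker_map _)]
  exact ENat.lt_add_left length_ne_top Module.length_pos

variable [IsLocalRing R] {x : R}

/-- A submodule `U` of `X` with `𝔪U ⊆ xU` that contains a vector killed by `x` and not lying in
`𝔪X`. -/
structure IsDescentSubmodule {M : Type*} [AddCommGroup M] [Module R M] (x : R)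
    (X U : Submodule R M) : Prop where
  le : U ≤ X
  smul_le : maximalIdeal R • U ≤ Ideal.span {x} • U
  exists_mem : ∃ u ∈ U, x • u = 0 ∧ u ∉ maximalIdeal R • X

lemma IsDescentSubmodule.map {M N : Type*} [AddCommGroup M] [Module R M] [AddCommGroup N]
    [Module R N] {X U : Submodule R M} (hU : IsDescentSubmodule x X U) {ι : M →ₗ[R] N}
    (hι : Function.Injective ι) : IsDescentSubmodule x (X.map ι) (U.map ι) where
  le := Submodule.map_mono hU.le
  smul_le := by
    rw [← Submodule.map_smul'', ← Submodule.map_smul'']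
    exact Submodule.map_mono hU.smul_le
  exists_mem := by
    obtain ⟨u, hu, hxu, huX⟩ := hU.exists_mem
    refine ⟨ι u, Submodule.mem_map_of_mem hu, by rw [← map_smul, hxu, map_zero], fun h => huX ?_⟩
    rw [← Submodule.map_smul''] at h
    obtain ⟨w, hw, hwu⟩ := h
    exact hι hwu ▸ hw

namespace IsExactConcaGenerator

lemma smul_eq_zero_iff_exists {ι : Type*} (hx : IsExactConcaGenerator x) {v : ι → R} :
    x • v = 0 ↔ ∃ a, x • a = v := by
  refine ⟨fun hv => ?_, ?_⟩
  · choose a ha using fun i =>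
      Ideal.mem_span_singleton'.1 (hx.mem_span_of_mul_eq_zero (congrFun hv i))
    exact ⟨a, funext fun i => (mul_comm _ _).trans (ha i)⟩
  · rintro ⟨a, rfl⟩
    rw [smul_smul, hx.mul_self, zero_smul]

variable {m m' : Type*} {D : (m → R) →ₗ[R] (m' → R)}

lemma map_span_smul_smul_top_eq_bot {M N : Type*} [AddCommGroup M] [Module R M] [AddCommGroup N]
    [Module R N] (hx : IsExactConcaGenerator x) {D : M →ₗ[R] N}
    (hD : LinearMap.range D ≤ maximalIdeal R • ⊤) :
    (Ideal.span {x} • maximalIdeal R • (⊤ : Submodule R M)).map D = ⊥ := by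
  rw [Submodule.map_smul'', Submodule.map_smul'', Submodule.map_top, eq_bot_iff]
  refine (Submodule.smul_mono le_rfl (Submodule.smul_mono le_rfl hD)).trans ?_
  rw [← Submodule.mul_smul (maximalIdeal R), ← Submodule.mul_smul, ← pow_two,
    hx.span_mul_sq_eq_bot, Submodule.bot_smul]

theorem isDescentSubmodule_map (hx : IsExactConcaGenerator x)
    (hD : LinearMap.range D ≤ maximalIdeal R • ⊤)
    (hdual : Function.Surjective (LinearMap.ker D).subtype.dualMap) {U W : Submodule R (m → R)}
    (hU : IsDescentSubmodule x (LinearMap.ker D) U)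
    (hW : maximalIdeal R • W ≤ U ⊔ Ideal.span {x} • W) (hUW : ∀ a, x • a ∈ U → a ∈ W) :
    IsDescentSubmodule x (LinearMap.range D) (W.map D) where
  le := LinearMap.map_le_range
  smul_le := by
    have map_U : U.map D = ⊥ := LinearMap.le_ker_iff_map.1 hU.le
    rw [← Submodule.map_smul'', ← Submodule.map_smul'']
    refine (Submodule.map_mono hW).trans ?_
    rw [Submodule.map_sup, map_U, bot_sup_eq]
  exists_mem := by
    obtain ⟨u, hu, hxu, huX⟩ := hU.exists_mem
    obtain ⟨a, rfl⟩ := hx.smul_eq_zero_iff_exists.1 hxu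
    refine ⟨D a, Submodule.mem_map_of_mem (hUW a hu), by rw [← map_smul]; exact hU.le hu,
      fun hDa => huX ?_⟩
    rw [LinearMap.range_eq_map, ← Submodule.map_smul''] at hDa
    obtain ⟨w, hw, hwa⟩ := hDa
    have hxw : x • w ∈ maximalIdeal R • LinearMap.ker D :=
      hx.span_smul_le_smul_of_surjective_dualMap
        (LinearMap.le_ker_iff_map.2 (hx.map_span_smul_smul_top_eq_bot hD)) hdual
        (Submodule.smul_mem_smul (Ideal.mem_span_singleton_self x) hw)
    have hxaw : x • (a - w) ∈ maximalIdeal R • LinearMap.ker D :=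
      Submodule.smul_mem_smul hx.mem (by rw [LinearMap.mem_ker, map_sub, hwa, sub_self])
    simpa [smul_sub] using add_mem hxaw hxw

lemma exists_smul_mem_span_smul_top_iff {ι : Type*} [Finite ι] (hx : IsExactConcaGenerator x) :
    ∃ y ∈ maximalIdeal R, ∀ f : ι → R,
      y • f ∈ Ideal.span {x} • (⊤ : Submodule R (ι → R)) ↔
        f ∈ maximalIdeal R • (⊤ : Submodule R (ι → R)) := by
  obtain ⟨y, hy, _, -, hpair⟩ := hx.exists_pair
  refine ⟨y, hy, fun f => ?_⟩
  rw [mem_smul_top_pi_iff, mem_smul_top_pi_iff]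
  refine forall_congr' fun i => ⟨fun hi => (hpair (f i) 0 ?_).1, fun hi => ?_⟩
  · rwa [zero_mul, add_zero, mul_comm]
  · exact hx.sq_le.trans Ideal.mul_le_left
      (pow_two (maximalIdeal R) ▸ Ideal.mul_mem_mul hy hi)

lemma smul_top_le_comap_span_smul_top {M N : Type*} [AddCommGroup M] [Module R M] [AddCommGroup N]
    [Module R N] (hx : IsExactConcaGenerator x) {D : M →ₗ[R] N}
    (hD : LinearMap.range D ≤ maximalIdeal R • ⊤) :
    maximalIdeal R • ⊤ ≤ (Ideal.span {x} • ⊤ : Submodule R N).comap D := by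
  rw [← Submodule.map_le_iff_le_comap, Submodule.map_smul'', Submodule.map_top]
  refine (Submodule.smul_mono le_rfl hD).trans ?_
  rw [← Submodule.mul_smul, ← pow_two]
  exact Submodule.smul_mono_left (hx.sq_le.trans Ideal.mul_le_left)

-- With `F = Rᵐ` and `F' = R^{m'}`: a suitable `y ∈ 𝔪` embeds `F / 𝔪F` into `F / xF`, mapping the
-- image of `W` into that of `U`, while `D` induces a map `F / 𝔪F → F' / xF'` that kills the class
-- of `a`.
lemma length_map_mkQ_lt [IsArtinianRing R] [Finite m] (hx : IsExactConcaGenerator x)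
    (hD : LinearMap.range D ≤ maximalIdeal R • ⊤) {U W : Submodule R (m → R)}
    (hW : maximalIdeal R • W ≤ U ⊔ Ideal.span {x} • W) {a : m → R} (ha : a ∈ W)
    (ha_not_mem : a ∉ maximalIdeal R • (⊤ : Submodule R (m → R))) (hDa : x • D a = 0) :
    Module.length R ((W.map D).map (Ideal.span {x} • ⊤ : Submodule R (m' → R)).mkQ) <
      Module.length R (U.map (Ideal.span {x} • ⊤ : Submodule R (m → R)).mkQ) := by
  obtain ⟨y, hy, hy_iff⟩ := hx.exists_smul_mem_span_smul_top_iff (ι := m)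
  let A := W.map (maximalIdeal R • ⊤ : Submodule R (m → R)).mkQ
  let D' := Submodule.mapQ _ _ D (hx.smul_top_le_comap_span_smul_top hD)
  let μ := LinearMap.lsmul R (m → R) y
  let Y := Submodule.mapQ (maximalIdeal R • ⊤) (Ideal.span {x} • ⊤) μ fun f => (hy_iff f).2
  have D'_a : D' (Submodule.mkQ _ a) = 0 := by
    obtain ⟨c, hc⟩ := hx.smul_eq_zero_iff_exists.1 hDa
    exact (Submodule.Quotient.mk_eq_zero _).2
      (mem_span_singleton_smul_iff.2 ⟨c, Submodule.mem_top, hc⟩)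
  have Y_injective : Function.Injective Y := by
    refine LinearMap.ker_eq_bot.1 (Submodule.ker_liftQ_eq_bot _ _ _ fun f hf => ?_)
    exact (hy_iff f).1 ((Submodule.Quotient.mk_eq_zero _).1 hf)
  have map_smul_le : W.map μ ≤ U ⊔ Ideal.span {x} • ⊤ := by
    rintro _ ⟨w, hw, rfl⟩
    have smul_mem : y • w ∈ U ⊔ Ideal.span {x} • W := hW (Submodule.smul_mem_smul hy hw)
    exact sup_le_sup_left (smul_mono_right _ le_top) U smul_mem
  have map_Y_le : A.map Y ≤ U.map (Submodule.mkQ _) := by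
    have Y_comp_mkQ : Y ∘ₗ Submodule.mkQ _ = Submodule.mkQ _ ∘ₗ μ := Submodule.mapQ_mkQ _ _ _
    rw [← Submodule.map_comp, Y_comp_mkQ, Submodule.map_comp]
    refine (Submodule.map_mono map_smul_le).trans ?_
    rw [Submodule.map_sup, Submodule.mkQ_map_self, sup_bot_eq]
  calc Module.length R ((W.map D).map (Ideal.span {x} • ⊤ : Submodule R (m' → R)).mkQ)
      = Module.length R (A.map D') := by
        rw [← Submodule.map_comp, ← Submodule.map_comp, Submodule.mapQ_mkQ]
    _ < Module.length R A := length_map_lt (Submodule.mem_map_of_mem ha)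
        (ha_not_mem ∘ (Submodule.Quotient.mk_eq_zero _).1) D'_a
    _ = Module.length R (A.map Y) := (Submodule.equivMapOfInjective Y Y_injective A).length_eq
    _ ≤ Module.length R (U.map (Ideal.span {x} • ⊤ : Submodule R (m → R)).mkQ) :=
        Module.length_le_of_injective _ (Submodule.inclusion_injective map_Y_le)

lemma exists_isDescentSubmodule_length_lt [IsArtinianRing R] [Finite m]
    (hx : IsExactConcaGenerator x) (hD : LinearMap.range D ≤ maximalIdeal R • ⊤)
    (hdual : Function.Surjective (LinearMap.ker D).subtype.dualMap) {U W : Submodule R (m → R)}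
    (hU : IsDescentSubmodule x (LinearMap.ker D) U)
    (hW : maximalIdeal R • W ≤ U ⊔ Ideal.span {x} • W) (hUW : ∀ a, x • a ∈ U → a ∈ W) :
    ∃ U', IsDescentSubmodule x (LinearMap.range D) U' ∧
      Module.length R (U'.map (Ideal.span {x} • ⊤ : Submodule R (m' → R)).mkQ) <
        Module.length R (U.map (Ideal.span {x} • ⊤ : Submodule R (m → R)).mkQ) := by
  have hDW := hx.isDescentSubmodule_map hD hdual hU hW hUW
  obtain ⟨_, ⟨a, ha, rfl⟩, hDa, ha_not_mem⟩ := hDW.exists_mem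
  refine ⟨W.map D, hDW, hx.length_map_mkQ_lt hD hW ha (fun h => ha_not_mem ?_) hDa⟩
  rw [LinearMap.range_eq_map, ← Submodule.map_smul'']
  exact Submodule.mem_map_of_mem h

end IsExactConcaGenerator

theorem IsNonGorensteinMinMult.not_isDescentSubmodule_ker {S : Type*} [CommRing S] [Algebra S R]
    {n : Ideal S} {x : S} (h : IsNonGorensteinMinMult n x)
    (hsurj : Function.Surjective (algebraMap S R))
    (hker : RingHom.ker (algebraMap S R) = Ideal.span {x ^ 2}) {b : ℕ → ℕ}
    {D : ∀ i, Matrix (Fin (b (i + 1))) (Fin (b i)) R}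
    (hexact : ∀ i, Function.Exact (D i).mulVecLin (D (i + 1)).mulVecLin)
    (hmin : ∀ i j l, D i j l ∈ maximalIdeal R)
    (hdual : ∀ i, Function.Surjective (LinearMap.ker (D i).mulVecLin).subtype.dualMap) (i : ℕ)
    (U : Submodule R (Fin (b i) → R)) :
    ¬ IsDescentSubmodule (algebraMap S R x) (LinearMap.ker (D i).mulVecLin) U := by
  have := h.isArtinianRing hsurj hker
  induction hl : Module.length R
      (U.map (Ideal.span {algebraMap S R x} • ⊤ : Submodule R (Fin (b i) → R)).mkQ)
    using WellFoundedLT.induction generalizing i U with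
  | ind l ih =>
    intro hU
    have hD : LinearMap.range (D i).mulVecLin ≤ maximalIdeal R • ⊤ := by
      rintro _ ⟨v, rfl⟩
      refine mem_smul_top_pi_iff.2 fun j => ?_
      change ∑ l, D i j l * v l ∈ _
      exact Ideal.sum_mem _ fun l _ => Ideal.mul_mem_right (v l) _ (hmin i j l)
    obtain ⟨W, hW, hUW⟩ := exists_colon_submodule_quotient h.mem_nonZeroDivisors h.mem
      h.span_mul_eq_sq.ge hsurj hker (U := U) (h.map_eq_maximalIdeal hsurj hker ▸ hU.smul_le)
    rw [h.map_eq_maximalIdeal hsurj hker] at hW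
    have hx := h.isExactConcaGenerator hsurj hker
    obtain ⟨U', hU', hlt⟩ := hx.exists_isDescentSubmodule_length_lt hD (hdual i) hU hW hUW
    rw [← (hexact i).linearMap_ker_eq] at hU'
    exact ih _ (hl ▸ hlt) (i + 1) U' rfl hU'

end Descent

section Approximation

open IsLocalRing

/-- `M` has a right approximation by the finitely generated modules of G-dimension zero. The
universe of `M` is independent of that of the approximating modules. -/
def HasRightGDimZeroApprox (R : Type) [CommRing R] (M : Type*) [AddCommGroup M] [Module R M] :
    Prop :=
  ∃ (X : ModuleCat R) (π : X →ₗ[R] M), Module.Finite R X ∧ GDimZero R X ∧ Function.Surjective π ∧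
    ∀ X' : ModuleCat R, Module.Finite R X' → GDimZero R X' →
      ∀ g : X' →ₗ[R] M, ∃ h : X' →ₗ[R] X, π ∘ₗ h = g

lemma HasRightGDimZeroApprox.of_linearEquiv {R : Type} [CommRing R] {M N : Type*}
    [AddCommGroup M] [Module R M] [AddCommGroup N] [Module R N]
    (hM : HasRightGDimZeroApprox R M) (e : M ≃ₗ[R] N) : HasRightGDimZeroApprox R N := by
  obtain ⟨X, π, hfin, hX, hπ, hlift⟩ := hM
  refine ⟨X, e.toLinearMap ∘ₗ π, hfin, hX, e.surjective.comp hπ, fun X' hfin' hX' g => ?_⟩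
  obtain ⟨h, hh⟩ := hlift X' hfin' hX' (e.symm.toLinearMap ∘ₗ g)
  exact ⟨h, by rw [LinearMap.comp_assoc, hh, ← LinearMap.comp_assoc]; simp⟩

namespace IsNonGorensteinMinMult

variable {S R K : Type} [CommRing S] [CommRing R] [Algebra S R] [AddCommGroup K] [Module R K]
  [Nontrivial K] {n : Ideal S} {x : S}

lemma exists_isDescentSubmodule_top [IsLocalRing R] (h : IsNonGorensteinMinMult n x)
    (hsurj : Function.Surjective (algebraMap S R))
    (hker : RingHom.ker (algebraMap S R) = Ideal.span {x ^ 2})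
    (hK : n.map (algebraMap S R) ≤ Module.annihilator R K) {X : Type} [AddCommGroup X] [Module R X]
    [Module.Finite R X] {π : X →ₗ[R] K}
    (hlift : ∀ X' : ModuleCat R, Module.Finite R X' → GDimZero R X' →
      ∀ g : X' →ₗ[R] K, ∃ h : X' →ₗ[R] X, π ∘ₗ h = g) :
    ∃ U : Submodule R X, IsDescentSubmodule (algebraMap S R x) ⊤ U := by
  have := h.isArtinianRing hsurj hker
  obtain ⟨κ, hκ⟩ := exists_ne (0 : K)
  obtain ⟨s, rfl⟩ := h.fg
  obtain ⟨U, ⟨u, hu, hπu, hxu⟩, hU⟩ := exists_submodule_smul_mem_map_smul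
    (v := fun i : s => algebraMap S R i) (y := algebraMap S R x)
    (P := fun z => π z ≠ 0 ∧ algebraMap S R x • z = 0) fun N => by
      obtain ⟨T, e, hfin, hT, he_nil, he_cons, hg⟩ := exists_gDimZero_word_chain
        h.mem_nonZeroDivisors h.mem h.span_mul_eq_sq.ge hsurj hker
        (v := ((↑) : s → S)) (fun i => Ideal.subset_span i.2) N
      obtain ⟨g, hgκ⟩ := hg K κ fun r hr =>
        Module.mem_annihilator.1 (hK (Ideal.mem_map_of_mem _ hr)) κ
      obtain ⟨φ, rfl⟩ := hlift T hfin hT g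
      refine ⟨φ ∘ e, ⟨ne_of_eq_of_ne hgκ hκ, ?_⟩, fun i l hl => ?_⟩
      · rw [Function.comp_apply, ← map_smul, he_nil, map_zero]
      · rw [Function.comp_apply, Function.comp_apply, ← map_smul, he_cons i l hl, map_smul]
  refine ⟨U, le_top, Submodule.smul_le.2 fun r hr z hz => ?_, u, hu, hxu, fun hu' => hπu ?_⟩
  · have le_comap : maximalIdeal R ≤
        (Ideal.span {algebraMap S R x} • U).comap (LinearMap.toSpanSingleton R X z) := by
      rw [← h.map_eq_maximalIdeal hsurj hker, Ideal.map_span]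
      refine Submodule.span_le.2 ?_
      rintro _ ⟨i, hi, rfl⟩
      exact mem_span_singleton_smul_iff.2 (hU ⟨i, hi⟩ z hz)
    exact le_comap hr
  · rw [← h.map_eq_maximalIdeal hsurj hker] at hu'
    refine (Submodule.smul_le.2 fun r hr z _ => ?_ : _ ≤ LinearMap.ker π) hu'
    rw [LinearMap.mem_ker, map_smul, Module.mem_annihilator.1 (hK hr)]

theorem not_hasRightGDimZeroApprox (h : IsNonGorensteinMinMult n x)
    (hsurj : Function.Surjective (algebraMap S R))
    (hker : RingHom.ker (algebraMap S R) = Ideal.span {x ^ 2})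
    (hK : n.map (algebraMap S R) ≤ Module.annihilator R K) : ¬ HasRightGDimZeroApprox R K := by
  have := h.isLocalRing hsurj hker
  have := h.isNoetherianRing hsurj hker
  rintro ⟨X, π, _, hX, -, hlift⟩
  obtain ⟨U, hU⟩ := h.exists_isDescentSubmodule_top hsurj hker hK hlift
  obtain ⟨b, ι, D, ι_injective, hι, hexact, hmin, hdual⟩ :=
    exists_minimal_coresolution hX.1 fun i => hX.2.2 (i + 1) i.succ_pos
  refine h.not_isDescentSubmodule_ker hsurj hker hexact hmin hdual 0 (U.map ι) ?_
  rw [hι.linearMap_ker_eq, LinearMap.range_eq_map]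
  exact hU.map ι_injective

end IsNonGorensteinMinMult

end Approximation

/-- for R = S/x²S with S a non-Gorenstein one-dimensional CM standard
graded algebra with minimal multiplicity and x a degree-one minimal reduction,
the residue field k = R/m has no right G(R)-approximation; in particular the
subcategory of modules of G-dimension zero is not contravariantly finite. -/
theorem stmt_19 (k S : Type) [Field k] [CommRing S] [Algebra k S]
    (𝒮 : ℕ → Submodule k S) [GradedAlgebra 𝒮] (hSG : IsStandardGraded k S 𝒮)
    (hdim : ringKrullDim S = 1)
    (hng : ¬ HasFiniteSelfInjDim S)
    (x : S) (hx1 : x ∈ 𝒮 1) (hxnzd : x ∈ nonZeroDivisors S)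
    (hMM : Ideal.span {x} * (HomogeneousIdeal.irrelevant 𝒮).toIdeal =
      (HomogeneousIdeal.irrelevant 𝒮).toIdeal ^ 2) :
    ∀ K : Type, ∀ (_ : AddCommGroup K) (_ : Module (S ⧸ Ideal.span {x ^ 2}) K),
      ∀ _ : K ≃ₗ[S ⧸ Ideal.span {x ^ 2}]
        ((S ⧸ Ideal.span {x ^ 2}) ⧸ Ideal.map (Ideal.Quotient.mk (Ideal.span {x ^ 2}))
            (HomogeneousIdeal.irrelevant 𝒮).toIdeal),
      (¬ ∃ (X : ModuleCat (S ⧸ Ideal.span {x ^ 2}))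
          (π : X →ₗ[S ⧸ Ideal.span {x ^ 2}] K),
          Module.Finite (S ⧸ Ideal.span {x ^ 2}) X ∧
          GDimZero (S ⧸ Ideal.span {x ^ 2}) X ∧
          Function.Surjective π ∧
          ∀ (X' : ModuleCat (S ⧸ Ideal.span {x ^ 2})),
            Module.Finite (S ⧸ Ideal.span {x ^ 2}) X' →
            GDimZero (S ⧸ Ideal.span {x ^ 2}) X' →
            ∀ g : X' →ₗ[S ⧸ Ideal.span {x ^ 2}] K,
              ∃ h : X' →ₗ[S ⧸ Ideal.span {x ^ 2}] X, π ∘ₗ h = g) ∧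
      ¬ (∀ (M : ModuleCat (S ⧸ Ideal.span {x ^ 2})),
          Module.Finite (S ⧸ Ideal.span {x ^ 2}) M →
          ∃ (X : ModuleCat (S ⧸ Ideal.span {x ^ 2}))
            (π : X →ₗ[S ⧸ Ideal.span {x ^ 2}] M),
            Module.Finite (S ⧸ Ideal.span {x ^ 2}) X ∧
            GDimZero (S ⧸ Ideal.span {x ^ 2}) X ∧
            Function.Surjective π ∧
            ∀ (X' : ModuleCat (S ⧸ Ideal.span {x ^ 2})),
              Module.Finite (S ⧸ Ideal.span {x ^ 2}) X' →
              GDimZero (S ⧸ Ideal.span {x ^ 2}) X' →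
              ∀ g : X' →ₗ[S ⧸ Ideal.span {x ^ 2}] M,
                ∃ h : X' →ₗ[S ⧸ Ideal.span {x ^ 2}] X, π ∘ₗ h = g) := by
  intro K _ _ φ
  have : Nontrivial S := by
    by_contra hS
    rw [not_nontrivial_iff_subsingleton] at hS
    simp [ringKrullDim_eq_bot_of_subsingleton] at hdim
  have h := isNonGorensteinMinMult_irrelevant hSG hng hx1 hxnzd hMM
  have hsurj := Ideal.Quotient.mk_surjective (I := Ideal.span {x ^ 2})
  have hker := Ideal.mk_ker (I := Ideal.span {x ^ 2})
  have := Ideal.Quotient.nontrivial_iff.2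
    (h.isMaximal_map (R := S ⧸ Ideal.span {x ^ 2}) hsurj hker).ne_top
  have : Nontrivial K := φ.toEquiv.nontrivial
  have not_approx : ¬ HasRightGDimZeroApprox (S ⧸ Ideal.span {x ^ 2}) K :=
    h.not_hasRightGDimZeroApprox hsurj hker (φ.annihilator_eq.trans Ideal.annihilator_quotient).ge
  refine ⟨not_approx, fun approx => not_approx ?_⟩
  have : Module.Finite (S ⧸ Ideal.span {x ^ 2}) K := .equiv φ.symm
  have ulift_approx : HasRightGDimZeroApprox (S ⧸ Ideal.span {x ^ 2}) (ULift K) :=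
    approx (.of _ (ULift K)) (.equiv ULift.moduleEquiv.symm)
  exact ulift_approx.of_linearEquiv ULift.moduleEquiv
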